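/- arXiv:1601.04308 — 2 statements merged into one kernel-verified Lean document; each statement's English description precedes it below -/
import Mathlib

section
/- Estimate of the truncated nonlocal terms. Assume the density bound dμ_x/dz ≤ C_μ|z|^{−(N+σ)} with σ ∈ (0,1), and (J1). Let ε ∈ (0,1), K > 0, χ_ε(r) = √(r² + ε⁴), φ ∈ C¹(ℝ^N) with bounded derivative, d a bounded Lipschitz function on cl(Ω) coinciding with the signed distance to ∂Ω near ∂Ω, and ψ(x,y) = φ((x+y)/2) + ε⁻¹χ_ε(|x−y|) + Kε⁻¹|d(x)−d(y)|. Let u be bounded usc and v bounded lsc on cl(Ω). Then for every ξ > 0 there exists a constant C₁ > 0 independent of ε such that for all x, y in cl(Ω): (i) −I_ξ[ψ(·,y)](x) − I^ξ[u](x) ≥ −ε⁻¹C₁ξ^{1−σ} − C₁ξ^{−σ}; (ii) −I_ξ[−ψ(x,·)](y) − I^ξ[v](y) ≤ ε⁻¹C₁ξ^{1−σ} + C₁ξ^{−σ}. -/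
set_option autoImplicit false

/- Common framework for censored nonlocal Hamilton–Jacobi equations with
Neumann boundary conditions (Barles-type viscosity solutions). -/

open Set Metric MeasureTheory Filter Topology Function
open scoped RealInnerProductSpace NNReal ENNReal

noncomputable section

namespace Censored

abbrev Euc (N : ℕ) : Type := EuclideanSpace ℝ (Fin N)

variable {N : ℕ}

/-- Signed distance to the boundary of `Ω`, positive inside `Ω`. -/
def sdist (Ω : Set (Euc N)) (x : Euc N) : ℝ := infDist x Ωᶜ - infDist x Ω

/-- A modulus of continuity. -/
def IsModulus (ω : ℝ → ℝ) : Prop :=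
  (∀ s, 0 ≤ ω s) ∧ Monotone ω ∧ Tendsto ω (nhdsWithin 0 (Ioi 0)) (nhds 0)

/-- A `W^{2,∞}` boundary chart for `Ω` at `s`, with radius `r`: a diffeomorphism of
class `W^{2,∞}` (i.e. `C^1` with Lipschitz differential, with inverse of the same
regularity) whose `N`-th component coincides with the signed distance. -/
def IsW2Chart (hN : 0 < N) (Ω : Set (Euc N)) (s : Euc N) (r : ℝ)
    (ψ ψinv : Euc N → Euc N) : Prop :=
  0 < r ∧
  ContDiffOn ℝ 1 ψ (ball s r) ∧
  (∃ L : ℝ≥0, LipschitzOnWith L (fun x => fderiv ℝ ψ x) (ball s r)) ∧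
  ContDiffOn ℝ 1 ψinv (ψ '' ball s r) ∧
  (∃ L : ℝ≥0, LipschitzOnWith L (fun x => fderiv ℝ ψinv x) (ψ '' ball s r)) ∧
  (∀ x ∈ ball s r, ψinv (ψ x) = x) ∧
  (∀ x ∈ ball s r, ψ x ⟨N - 1, Nat.sub_lt hN Nat.one_pos⟩ = sdist Ω x)

/-- Assumption (O): `Ω` is open of class `W^{2,∞}`. -/
def IsW2Domain (hN : 0 < N) (Ω : Set (Euc N)) : Prop :=
  IsOpen Ω ∧ ∀ s ∈ frontier Ω, ∃ r ψ ψinv, IsW2Chart hN Ω s r ψ ψinv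

/-- `n` is the exterior unit normal vector field to `∂Ω`:  `n = -D d` where `d` is the
signed distance (positive inside). -/
def IsExteriorNormal (Ω : Set (Euc N)) (n : Euc N → Euc N) : Prop :=
  ∀ x ∈ frontier Ω, ‖n x‖ = 1 ∧ HasGradientAt (sdist Ω) (-(n x)) x

/-- First part of assumption (M): the measures `μ_x` have a (measurable, nonnegative)
density `g x` with respect to Lebesgue measure, bounded by `Cμ |z|^{-(N+σ)}`. -/
def AssumptionM1 (Ω : Set (Euc N)) (g : Euc N → Euc N → ℝ) (Cμ σ : ℝ) : Prop :=
  0 < Cμ ∧ σ ∈ Ioo (0:ℝ) 1 ∧ (∀ x, Measurable (g x)) ∧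
  (∀ x ∈ closure Ω, ∀ z : Euc N, 0 ≤ g x z) ∧
  (∀ x ∈ closure Ω, ∀ z : Euc N, g x z ≤ Cμ * ‖z‖ ^ (-((N : ℝ) + σ)))

/-- Assumption (M). -/
def AssumptionM (Ω : Set (Euc N)) (g : Euc N → Euc N → ℝ) (Cμ Dμ σ : ℝ) : Prop :=
  AssumptionM1 Ω g Cμ σ ∧ 0 < Dμ ∧
  (∀ x ∈ closure Ω, ∀ y ∈ closure Ω, ∀ z : Euc N,
    |g x z - g y z| ≤ Dμ * ‖x - y‖ * ‖z‖ ^ (-((N : ℝ) + σ)))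

/-- Assumption (J0). -/
def AssumptionJ0 (Ω : Set (Euc N)) (j : Euc N → Euc N → Euc N) (Aj : ℝ) : Prop :=
  ∀ x ∈ closure Ω,
    ContDiff ℝ 1 (j x) ∧ Function.Bijective (j x) ∧
    ContDiff ℝ 1 (Function.invFun (j x)) ∧
    ∀ z : Euc N, ‖fderiv ℝ (Function.invFun (j x)) z‖ ≤ Aj

/-- Assumption (J1). -/
def AssumptionJ1 (Ω : Set (Euc N)) (j : Euc N → Euc N → Euc N) (Cj' Cj Dj : ℝ) : Prop :=
  0 < Cj' ∧ 0 < Cj ∧ 0 < Dj ∧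
  (∀ x ∈ closure Ω, ∀ z : Euc N, Cj' * ‖z‖ ≤ ‖j x z‖ ∧ ‖j x z‖ ≤ Cj * ‖z‖) ∧
  (∀ x ∈ closure Ω, ∀ y ∈ closure Ω, ∀ z : Euc N, ‖j x z - j y z‖ ≤ Dj * ‖z‖ * ‖x - y‖)

/-- The truncated censored nonlocal term over `{|z| ≥ ξ}` (`I^ξ`). -/
def Iout (Ω : Set (Euc N)) (j : Euc N → Euc N → Euc N) (g : Euc N → Euc N → ℝ)
    (ξ : ℝ) (u : Euc N → ℝ) (x : Euc N) : ℝ :=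
  ∫ z in {z : Euc N | ξ ≤ ‖z‖ ∧ x + j x z ∈ closure Ω}, (u (x + j x z) - u x) * g x z

/-- The truncated censored nonlocal term over `{|z| < ξ}` (`I_ξ`). -/
def Iin (Ω : Set (Euc N)) (j : Euc N → Euc N → Euc N) (g : Euc N → Euc N → ℝ)
    (ξ : ℝ) (φ : Euc N → ℝ) (x : Euc N) : ℝ :=
  ∫ z in {z : Euc N | ‖z‖ < ξ ∧ x + j x z ∈ closure Ω}, (φ (x + j x z) - φ x) * g x z

/-- The censored nonlocal operator of order `σ < 1`, as a principal value. -/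
def Ipv (Ω : Set (Euc N)) (j : Euc N → Euc N → Euc N) (g : Euc N → Euc N → ℝ)
    (u : Euc N → ℝ) (x : Euc N) : ℝ :=
  limUnder (nhdsWithin (0:ℝ) (Ioi 0)) (fun δ =>
    ∫ z in {z : Euc N | δ < ‖z‖ ∧ x + j x z ∈ closure Ω}, (u (x + j x z) - u x) * g x z)

/-- `u` is bounded on `S`. -/
def BddOn (u : Euc N → ℝ) (S : Set (Euc N)) : Prop := ∃ M, ∀ x ∈ S, |u x| ≤ M

/-- `u = u(x,t)` is bounded on `S × I`. -/
def BddOnT (u : Euc N → ℝ → ℝ) (S : Set (Euc N)) (I : Set ℝ) : Prop :=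
  ∃ M, ∀ x ∈ S, ∀ t ∈ I, |u x t| ≤ M

/-- Viscosity subsolution, with generalized Neumann boundary conditions, of the
stationary equation `F(x, u, Du, I[u]) = 0` in `Ω`, `∂u/∂n = 0` on `∂Ω`,
for the censored operator determined by `j, g` (with constant `Cj` from (J1)). -/
def IsSubSol (Ω : Set (Euc N)) (j : Euc N → Euc N → Euc N) (g : Euc N → Euc N → ℝ)
    (n : Euc N → Euc N) (Cj : ℝ) (F : Euc N → ℝ → Euc N → ℝ → ℝ) (u : Euc N → ℝ) : Prop :=
  ∀ ξ > (0:ℝ), ∀ φ : Euc N → ℝ, ContDiff ℝ 1 φ →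
    ∀ x ∈ closure Ω,
      (∀ y ∈ closedBall x (Cj * ξ) ∩ closure Ω, u y - φ y ≤ u x - φ x) →
      (x ∈ Ω → F x (u x) (gradient φ x) (Iin Ω j g ξ φ x + Iout Ω j g ξ u x) ≤ 0) ∧
      (x ∈ frontier Ω →
        min (F x (u x) (gradient φ x) (Iin Ω j g ξ φ x + Iout Ω j g ξ u x))
          ⟪gradient φ x, n x⟫ ≤ 0)

/-- Viscosity supersolution, with generalized Neumann boundary conditions. -/
def IsSuperSol (Ω : Set (Euc N)) (j : Euc N → Euc N → Euc N) (g : Euc N → Euc N → ℝ)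
    (n : Euc N → Euc N) (Cj : ℝ) (F : Euc N → ℝ → Euc N → ℝ → ℝ) (v : Euc N → ℝ) : Prop :=
  ∀ ξ > (0:ℝ), ∀ φ : Euc N → ℝ, ContDiff ℝ 1 φ →
    ∀ x ∈ closure Ω,
      (∀ y ∈ closedBall x (Cj * ξ) ∩ closure Ω, v x - φ x ≤ v y - φ y) →
      (x ∈ Ω → 0 ≤ F x (v x) (gradient φ x) (Iin Ω j g ξ φ x + Iout Ω j g ξ v x)) ∧
      (x ∈ frontier Ω →
        0 ≤ max (F x (v x) (gradient φ x) (Iin Ω j g ξ φ x + Iout Ω j g ξ v x))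
          ⟪gradient φ x, n x⟫)

/-- `F` corresponding to the stationary equation `u - I[u] + H(x,Du) = 0`. -/
def statF (H : Euc N → Euc N → ℝ) : Euc N → ℝ → Euc N → ℝ → ℝ :=
  fun x r p I => r - I + H x p

/-- `F` corresponding to the ergodic equation `λ - I[w] - H(x,Dw) = 0`. -/
def ergF (H : Euc N → Euc N → ℝ) (lam : ℝ) : Euc N → ℝ → Euc N → ℝ → ℝ :=
  fun x _ p I => lam - I - H x p

/-- Parabolic viscosity subsolution with generalized Neumann boundary conditions,
for `F(x, t, ∂_t u, u, Du, I[u(·,t)]) = 0` in `Ω × (0,∞)`. -/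
def IsParSubSol (Ω : Set (Euc N)) (j : Euc N → Euc N → Euc N) (g : Euc N → Euc N → ℝ)
    (n : Euc N → Euc N) (Cj : ℝ) (F : Euc N → ℝ → ℝ → ℝ → Euc N → ℝ → ℝ)
    (u : Euc N → ℝ → ℝ) : Prop :=
  ∀ ξ > (0:ℝ), ∀ φ : Euc N → ℝ → ℝ,
    ContDiff ℝ 1 (fun q : Euc N × ℝ => φ q.1 q.2) →
    ∀ x ∈ closure Ω, ∀ t ∈ Ioi (0:ℝ),
      (∀ y ∈ closedBall x (Cj * ξ) ∩ closure Ω, ∀ s ∈ Ioi (0:ℝ), |s - t| ≤ ξ →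
        u y s - φ y s ≤ u x t - φ x t) →
      (x ∈ Ω →
        F x t (deriv (φ x) t) (u x t) (gradient (fun y => φ y t) x)
          (Iin Ω j g ξ (fun y => φ y t) x + Iout Ω j g ξ (fun y => u y t) x) ≤ 0) ∧
      (x ∈ frontier Ω →
        min (F x t (deriv (φ x) t) (u x t) (gradient (fun y => φ y t) x)
              (Iin Ω j g ξ (fun y => φ y t) x + Iout Ω j g ξ (fun y => u y t) x))
          ⟪gradient (fun y => φ y t) x, n x⟫ ≤ 0)

/-- Parabolic viscosity supersolution with generalized Neumann boundary conditions. -/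
def IsParSuperSol (Ω : Set (Euc N)) (j : Euc N → Euc N → Euc N) (g : Euc N → Euc N → ℝ)
    (n : Euc N → Euc N) (Cj : ℝ) (F : Euc N → ℝ → ℝ → ℝ → Euc N → ℝ → ℝ)
    (v : Euc N → ℝ → ℝ) : Prop :=
  ∀ ξ > (0:ℝ), ∀ φ : Euc N → ℝ → ℝ,
    ContDiff ℝ 1 (fun q : Euc N × ℝ => φ q.1 q.2) →
    ∀ x ∈ closure Ω, ∀ t ∈ Ioi (0:ℝ),
      (∀ y ∈ closedBall x (Cj * ξ) ∩ closure Ω, ∀ s ∈ Ioi (0:ℝ), |s - t| ≤ ξ →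
        v x t - φ x t ≤ v y s - φ y s) →
      (x ∈ Ω →
        0 ≤ F x t (deriv (φ x) t) (v x t) (gradient (fun y => φ y t) x)
          (Iin Ω j g ξ (fun y => φ y t) x + Iout Ω j g ξ (fun y => v y t) x)) ∧
      (x ∈ frontier Ω →
        0 ≤ max (F x t (deriv (φ x) t) (v x t) (gradient (fun y => φ y t) x)
              (Iin Ω j g ξ (fun y => φ y t) x + Iout Ω j g ξ (fun y => v y t) x))
          ⟪gradient (fun y => φ y t) x, n x⟫)

/-- `F` for the parabolic equation `∂_t u - I[u] + H(x,t,u,Du) = 0`. -/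
def parF (H : Euc N → ℝ → ℝ → Euc N → ℝ) : Euc N → ℝ → ℝ → ℝ → Euc N → ℝ → ℝ :=
  fun x t pt r p I => pt - I + H x t r p

/-! ### Hamiltonians: Bellman form and coercive form (stationary) -/




/-- `H` is of Bellman type with drift `b` and cost `l` over the control set `A`. -/
def IsBellman {A : Type} (b : Euc N → A → Euc N) (l : Euc N → A → ℝ)
    (H : Euc N → Euc N → ℝ) : Prop :=
  ∀ x p, H x p = ⨆ α : A, (-⟪b x α, p⟫ - l x α)

/-- Continuity and boundedness of the Bellman data `b, l`. -/
def BellmanData {A : Type} [TopologicalSpace A]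
    (b : Euc N → A → Euc N) (l : Euc N → A → ℝ) : Prop :=
  Continuous (fun q : Euc N × A => b q.1 q.2) ∧ (∃ M, ∀ x α, ‖b x α‖ ≤ M) ∧
  Continuous (fun q : Euc N × A => l q.1 q.2) ∧ (∃ M, ∀ x α, |l x α| ≤ M)

/-- Assumption (C): uniform continuity of the cost `l`. -/
def AssumptionC (Ω : Set (Euc N)) {A : Type} (l : Euc N → A → ℝ) : Prop :=
  ∃ ω, IsModulus ω ∧ ∀ (α : A), ∀ x ∈ closure Ω, ∀ y ∈ closure Ω,
    |l x α - l y α| ≤ ω ‖x - y‖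

/-- Assumption (L): uniform Lipschitz continuity of the drift `b`. -/
def AssumptionL (Ω : Set (Euc N)) {A : Type} (b : Euc N → A → Euc N) : Prop :=
  ∃ C > (0:ℝ), ∀ (α : A), ∀ x ∈ closure Ω, ∀ y ∈ closure Ω,
    ‖b x α - b y α‖ ≤ C * ‖x - y‖

/-- The part of the boundary where the drift points inwards for every control. -/
def GammaIn (Ω : Set (Euc N)) (n : Euc N → Euc N) {A : Type}
    (b : Euc N → A → Euc N) : Set (Euc N) :=
  {x | x ∈ frontier Ω ∧ ∀ α : A, ⟪b x α, n x⟫ < 0}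

/-- The part of the boundary where the drift points outwards for every control. -/
def GammaOut (Ω : Set (Euc N)) (n : Euc N → Euc N) {A : Type}
    (b : Euc N → A → Euc N) : Set (Euc N) :=
  {x | x ∈ frontier Ω ∧ ∀ α : A, 0 < ⟪b x α, n x⟫}

/-- The part of the boundary where the drift points both inwards and outwards. -/
def GammaMix (Ω : Set (Euc N)) (n : Euc N → Euc N) {A : Type}
    (b : Euc N → A → Euc N) : Set (Euc N) :=
  {x | x ∈ frontier Ω ∧ ∃ α₁ α₂ : A, ⟪b x α₁, n x⟫ < 0 ∧ 0 < ⟪b x α₂, n x⟫}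

/-- `S` is a union of connected components of `T`. -/
def IsUnionOfComponents (S T : Set (Euc N)) : Prop :=
  S ⊆ T ∧ ∀ x ∈ S, connectedComponentIn T x ⊆ S

/-- Assumption (B). -/
def AssumptionB (Ω : Set (Euc N)) (n : Euc N → Euc N) {A : Type}
    (b : Euc N → A → Euc N) : Prop :=
  GammaIn Ω n b ∪ GammaOut Ω n b ∪ GammaMix Ω n b = frontier Ω ∧
  IsUnionOfComponents (GammaIn Ω n b) (frontier Ω) ∧
  IsUnionOfComponents (GammaOut Ω n b) (frontier Ω) ∧
  IsUnionOfComponents (GammaMix Ω n b) (frontier Ω)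

/-- All the structural assumptions on a Bellman Hamiltonian: (C), (L), (B) together
with continuity and boundedness of the data. -/
def StatBellmanOK (Ω : Set (Euc N)) (n : Euc N → Euc N) {A : Type} [TopologicalSpace A]
    (b : Euc N → A → Euc N) (l : Euc N → A → ℝ) (H : Euc N → Euc N → ℝ) : Prop :=
  BellmanData b l ∧ IsBellman b l H ∧ AssumptionC Ω l ∧ AssumptionL Ω b ∧ AssumptionB Ω n b

/-- Assumption (H1): superfractional coercivity of order `m > σ`. -/
def AssumptionH1 (Ω : Set (Euc N)) (H : Euc N → Euc N → ℝ) (σ m c₀ D : ℝ) : Prop :=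
  σ < m ∧ 0 < c₀ ∧ 0 < D ∧ ∀ x ∈ closure Ω, ∀ p : Euc N, c₀ * ‖p‖ ^ m - D ≤ H x p

/-- Assumption (Ha) (sublinear case) with constant `C` and modulus `ω₁`. -/
def AssumptionHa (H : Euc N → Euc N → ℝ) (C : ℝ) (ω₁ : ℝ → ℝ) : Prop :=
  0 < C ∧ IsModulus ω₁ ∧
  ∀ x y p q : Euc N, H y p - H x q ≤ ω₁ ‖x - y‖ * (1 + ‖p‖) + C * ‖p - q‖

/-- Assumption (Hb) (superlinear case) with constants `m, A, Cb`. -/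
def AssumptionHb (H : Euc N → Euc N → ℝ) (m A Cb : ℝ) : Prop :=
  1 < m ∧ 0 < A ∧ 0 < Cb ∧
  ∀ μ ∈ Ioo (0:ℝ) 1, ∀ x p : Euc N,
    H x p - μ * H x (μ⁻¹ • p) ≤ (1 - μ) * (Cb * (1 - m) * ‖p‖ ^ m + A)

/-- Assumption (Hc) with constant `C` and modulus `ω₁`. -/
def AssumptionHc (H : Euc N → Euc N → ℝ) (m C : ℝ) (ω₁ : ℝ → ℝ) : Prop :=
  0 < C ∧ IsModulus ω₁ ∧
  ∀ x y p q : Euc N,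
    H y p - H x q ≤ ω₁ ‖x - y‖ * (1 + (max ‖p‖ ‖q‖) ^ m)
      + C * ‖p - q‖ * (max ‖p‖ ‖q‖) ^ (m - 1)

/-- The structural assumptions on a coercive Hamiltonian:
(H1), (Ha) (sublinear) or (H1), (Hb), (Hc) (superlinear). -/
def StatCoerciveOK (Ω : Set (Euc N)) (H : Euc N → Euc N → ℝ) (σ : ℝ) : Prop :=
  ∃ m c₀ D, AssumptionH1 Ω H σ m c₀ D ∧
    ((m ≤ 1 ∧ ∃ C ω₁, AssumptionHa H C ω₁) ∨
     (∃ A Cb, AssumptionHb H m A Cb ∧ ∃ C ω₁, AssumptionHc H m C ω₁))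

/-- Assumption (E). -/
def AssumptionE (Ω : Set (Euc N)) (H : Euc N → Euc N → ℝ) : Prop :=
  ∀ R > (0:ℝ), ∃ HR : ℝ, ∀ x ∈ closure Ω, ∀ p : Euc N, ‖p‖ ≤ R → |H x p| ≤ HR

/-! ### Parabolic Hamiltonians and assumptions -/

/-- `H(x,t,r,p)` is of (time-dependent) Bellman type. -/
def IsParBellman {A : Type} (lam : Euc N → ℝ → A → ℝ) (b : Euc N → ℝ → A → Euc N)
    (l : Euc N → ℝ → A → ℝ) (H : Euc N → ℝ → ℝ → Euc N → ℝ) : Prop :=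
  ∀ x t r p, H x t r p = ⨆ α : A, (lam x t α * r - ⟪b x t α, p⟫ - l x t α)

/-- Continuity and boundedness of the parabolic Bellman data. -/
def ParBellmanData {A : Type} [TopologicalSpace A] (lam : Euc N → ℝ → A → ℝ)
    (b : Euc N → ℝ → A → Euc N) (l : Euc N → ℝ → A → ℝ) : Prop :=
  Continuous (fun q : Euc N × ℝ × A => lam q.1 q.2.1 q.2.2) ∧
  (∃ M, ∀ x t α, |lam x t α| ≤ M) ∧
  Continuous (fun q : Euc N × ℝ × A => b q.1 q.2.1 q.2.2) ∧
  (∃ M, ∀ x t α, ‖b x t α‖ ≤ M) ∧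
  Continuous (fun q : Euc N × ℝ × A => l q.1 q.2.1 q.2.2) ∧
  (∃ M, ∀ x t α, |l x t α| ≤ M)

/-- Assumption (C'): uniform continuity of `l` and `λ` in `(x,t)`, uniformly in `α`. -/
def AssumptionC' (Ω : Set (Euc N)) {A : Type} (lam l : Euc N → ℝ → A → ℝ) : Prop :=
  (∃ ω, IsModulus ω ∧ ∀ (α : A), ∀ x ∈ closure Ω, ∀ y ∈ closure Ω,
      ∀ t ∈ Ici (0:ℝ), ∀ s ∈ Ici (0:ℝ), |l x t α - l y s α| ≤ ω (‖x - y‖ + |t - s|)) ∧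
  (∃ ω, IsModulus ω ∧ ∀ (α : A), ∀ x ∈ closure Ω, ∀ y ∈ closure Ω,
      ∀ t ∈ Ici (0:ℝ), ∀ s ∈ Ici (0:ℝ), |lam x t α - lam y s α| ≤ ω (‖x - y‖ + |t - s|))

/-- Assumption (L'): uniform Lipschitz continuity of the drift `b` in `(x,t)`. -/
def AssumptionL' (Ω : Set (Euc N)) {A : Type} (b : Euc N → ℝ → A → Euc N) : Prop :=
  ∃ C > (0:ℝ), ∀ (α : A), ∀ x ∈ closure Ω, ∀ y ∈ closure Ω, ∀ s ∈ Ici (0:ℝ), ∀ t ∈ Ici (0:ℝ),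
    ‖b x s α - b y t α‖ ≤ C * (‖x - y‖ + |s - t|)

/-- Inward part of the boundary for time-dependent drift. -/
def GammaInT (Ω : Set (Euc N)) (n : Euc N → Euc N) {A : Type}
    (b : Euc N → ℝ → A → Euc N) : Set (Euc N) :=
  {x | x ∈ frontier Ω ∧ ∀ t ∈ Ici (0:ℝ), ∀ α : A, ⟪b x t α, n x⟫ < 0}

/-- Outward part of the boundary for time-dependent drift. -/
def GammaOutT (Ω : Set (Euc N)) (n : Euc N → Euc N) {A : Type}
    (b : Euc N → ℝ → A → Euc N) : Set (Euc N) :=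
  {x | x ∈ frontier Ω ∧ ∀ t ∈ Ici (0:ℝ), ∀ α : A, 0 < ⟪b x t α, n x⟫}

/-- Mixed part of the boundary for time-dependent drift. -/
def GammaMixT (Ω : Set (Euc N)) (n : Euc N → Euc N) {A : Type}
    (b : Euc N → ℝ → A → Euc N) : Set (Euc N) :=
  {x | x ∈ frontier Ω ∧ ∀ t ∈ Ici (0:ℝ),
    ∃ α₁ α₂ : A, ⟪b x t α₁, n x⟫ < 0 ∧ 0 < ⟪b x t α₂, n x⟫}

/-- Assumption (B'). -/
def AssumptionB' (Ω : Set (Euc N)) (n : Euc N → Euc N) {A : Type}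
    (b : Euc N → ℝ → A → Euc N) : Prop :=
  GammaInT Ω n b ∪ GammaOutT Ω n b ∪ GammaMixT Ω n b = frontier Ω ∧
  IsUnionOfComponents (GammaInT Ω n b) (frontier Ω) ∧
  IsUnionOfComponents (GammaOutT Ω n b) (frontier Ω) ∧
  IsUnionOfComponents (GammaMixT Ω n b) (frontier Ω)

/-- All the structural assumptions on a parabolic Bellman Hamiltonian: (C'), (L'), (B'). -/
def ParBellmanOK (Ω : Set (Euc N)) (n : Euc N → Euc N) {A : Type} [TopologicalSpace A]
    (lam : Euc N → ℝ → A → ℝ) (b : Euc N → ℝ → A → Euc N) (l : Euc N → ℝ → A → ℝ)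
    (H : Euc N → ℝ → ℝ → Euc N → ℝ) : Prop :=
  ParBellmanData lam b l ∧ IsParBellman lam b l H ∧
  AssumptionC' Ω lam l ∧ AssumptionL' Ω b ∧ AssumptionB' Ω n b

/-- Assumption (H'): monotonicity of `H` in the `u` variable. -/
def AssumptionH' (Ω : Set (Euc N)) (H : Euc N → ℝ → ℝ → Euc N → ℝ) : Prop :=
  ∃ K : ℝ, ∀ R > (0:ℝ), ∃ γ, -K ≤ γ ∧
    ∀ x ∈ closure Ω, ∀ t ∈ Icc (0:ℝ) R, ∀ r s : ℝ, |r| ≤ R → |s| ≤ R → s ≤ r →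
      ∀ p : Euc N, γ * (r - s) ≤ H x t r p - H x t s p

/-- Assumption (H''): the monotonicity constants `γ_R` are bounded below by some `γ₀ > 0`. -/
def AssumptionH'' (Ω : Set (Euc N)) (H : Euc N → ℝ → ℝ → Euc N → ℝ) : Prop :=
  ∃ γ₀ > (0:ℝ), ∀ R > (0:ℝ), ∃ γ, γ₀ ≤ γ ∧
    ∀ x ∈ closure Ω, ∀ t ∈ Icc (0:ℝ) R, ∀ r s : ℝ, |r| ≤ R → |s| ≤ R → s ≤ r →
      ∀ p : Euc N, γ * (r - s) ≤ H x t r p - H x t s p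

/-- Assumption (E'). -/
def AssumptionE' (Ω : Set (Euc N)) (H : Euc N → ℝ → ℝ → Euc N → ℝ) : Prop :=
  ∀ T > (0:ℝ), ∀ R > (0:ℝ), ∃ HR : ℝ, ∀ x ∈ Ω, ∀ t ∈ Icc (0:ℝ) T, ∀ r : ℝ, ∀ p : Euc N,
    |r| ≤ R → ‖p‖ ≤ R → |H x t r p| ≤ HR

/-- Assumption (H0'): separated structure `H(x,t,r,p) = H₀(x,r,p) - f(x,t)`. -/
def AssumptionH0' (H : Euc N → ℝ → ℝ → Euc N → ℝ) : Prop :=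
  ∃ (H₀ : Euc N → ℝ → Euc N → ℝ) (f : Euc N → ℝ → ℝ),
    Continuous (fun q : Euc N × ℝ × Euc N => H₀ q.1 q.2.1 q.2.2) ∧
    UniformContinuous (fun q : Euc N × ℝ => f q.1 q.2) ∧
    (∃ M, ∀ x t, |f x t| ≤ M) ∧
    ∀ x t r p, H x t r p = H₀ x r p - f x t

/-- Assumption (He'): `H` satisfies (H1), (Ha) in `x`, uniformly in `t`
and uniformly on compact sets in `r` (sublinearly coercive case). -/
def AssumptionHe' (Ω : Set (Euc N)) (H : Euc N → ℝ → ℝ → Euc N → ℝ) (σ : ℝ) : Prop :=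
  ∃ m : ℝ, σ < m ∧ m ≤ 1 ∧
    ∀ R > (0:ℝ),
      (∃ c₀ > (0:ℝ), ∃ D > (0:ℝ), ∀ x ∈ closure Ω, ∀ t ∈ Ici (0:ℝ), ∀ r : ℝ, |r| ≤ R →
        ∀ p : Euc N, c₀ * ‖p‖ ^ m - D ≤ H x t r p) ∧
      (∃ C > (0:ℝ), ∃ ω₁, IsModulus ω₁ ∧ ∀ x y : Euc N, ∀ t ∈ Ici (0:ℝ), ∀ r : ℝ, |r| ≤ R →
        ∀ p q : Euc N, H y t r p - H x t r q ≤ ω₁ ‖x - y‖ * (1 + ‖p‖) + C * ‖p - q‖)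

/-- Assumption (He''): `H` satisfies (H1), (Hb), (Hc) in `x`, uniformly in `t`
and uniformly on compact sets in `r` (superlinearly coercive case, exponent `m`). -/
def AssumptionHe'' (Ω : Set (Euc N)) (H : Euc N → ℝ → ℝ → Euc N → ℝ) (σ m : ℝ) : Prop :=
  1 < m ∧ σ < m ∧
  ∀ R > (0:ℝ),
    (∃ c₀ > (0:ℝ), ∃ D > (0:ℝ), ∀ x ∈ closure Ω, ∀ t ∈ Ici (0:ℝ), ∀ r : ℝ, |r| ≤ R →
      ∀ p : Euc N, c₀ * ‖p‖ ^ m - D ≤ H x t r p) ∧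
    (∃ A > (0:ℝ), ∃ Cb > (0:ℝ), ∀ μ ∈ Ioo (0:ℝ) 1, ∀ x ∈ closure Ω, ∀ t ∈ Ici (0:ℝ),
      ∀ r : ℝ, |r| ≤ R → ∀ p : Euc N,
        H x t r p - μ * H x t r (μ⁻¹ • p) ≤ (1 - μ) * (Cb * (1 - m) * ‖p‖ ^ m + A)) ∧
    (∃ C > (0:ℝ), ∃ ω₁, IsModulus ω₁ ∧ ∀ x y : Euc N, ∀ t ∈ Ici (0:ℝ), ∀ r : ℝ, |r| ≤ R →
      ∀ p q : Euc N, H y t r p - H x t r q ≤ ω₁ ‖x - y‖ * (1 + (max ‖p‖ ‖q‖) ^ m)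
        + C * ‖p - q‖ * (max ‖p‖ ‖q‖) ^ (m - 1))

/-- Structural parabolic coercive assumptions: (H0') and (He') or (He''). -/
def ParCoerciveOK (Ω : Set (Euc N)) (H : Euc N → ℝ → ℝ → Euc N → ℝ) (σ : ℝ) : Prop :=
  AssumptionH0' H ∧ (AssumptionHe' Ω H σ ∨ ∃ m, AssumptionHe'' Ω H σ m)

/-! ### Iterative covering property -/

/-- The iterated reachable sets `X_r(x)` of the censored jump process. -/
def Xiter (Ω : Set (Euc N)) (j : Euc N → Euc N → Euc N) (g : Euc N → Euc N → ℝ)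
    (x : Euc N) : ℕ → Set (Euc N)
  | 0 => {x}
  | r + 1 => (⋃ ξ ∈ Xiter Ω j g x r,
      (fun z => ξ + j ξ z) '' closure (Function.support (g ξ))) ∩ closure Ω

/-- Iterative covering property: `𝒳(x) = Ω` (i.e. the closure of the reachable set
is all of `closure Ω`) for every `x ∈ Ω`. -/
def CoveringProperty (Ω : Set (Euc N)) (j : Euc N → Euc N → Euc N)
    (g : Euc N → Euc N → ℝ) : Prop :=
  ∀ x ∈ Ω, closure (⋃ r : ℕ, Xiter Ω j g x r) = closure Ω

/-- Norm bound for a set integral over a possibly non-measurable set. -/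
lemma abs_setIntegral_le_of_bound {E : Type*} [MeasurableSpace E] {μ : Measure E}
    (S : Set E) (f h : E → ℝ) (h0 : ∀ z, 0 ≤ h z) (hi : Integrable h μ)
    (hb : ∀ z ∈ S, |f z| ≤ h z) : |∫ z in S, f z ∂μ| ≤ ∫ z, h z ∂μ := by
  by_cases hf : AEStronglyMeasurable f (μ.restrict S)
  · have hae : ∀ᵐ z ∂(μ.restrict S), ‖f z‖ ≤ h z := by
      have hn : NullMeasurableSet {z | h z < ‖f z‖} (μ.restrict S) :=
        nullMeasurableSet_lt hi.restrict.aemeasurable hf.norm.aemeasurable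
      have h1 : (μ.restrict S) {z | h z < ‖f z‖} = 0 := by
        rw [Measure.restrict_apply₀ hn]
        have : {z | h z < ‖f z‖} ∩ S = ∅ := by
          ext z
          simp only [mem_inter_iff, mem_setOf_eq, mem_empty_iff_false, iff_false, not_and]
          intro hz hzS
          exact absurd (hb z hzS) (not_le.mpr hz)
        rw [this]
        exact measure_empty
      rw [ae_iff]
      simpa only [not_le] using h1
    have h2 := norm_integral_le_of_norm_le hi.restrict hae
    rw [Real.norm_eq_abs] at h2
    exact h2.trans (setIntegral_le_integral hi (Eventually.of_forall h0))
  · rw [integral_undef (fun hh => hf hh.aestronglyMeasurable), abs_zero]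
    exact integral_nonneg h0

/-- Majorant for the inner integral. -/
def hin (N : ℕ) (σ ξ : ℝ) (z : Euc N) : ℝ :=
  (ball (0 : Euc N) ξ).indicator (fun z => ‖z‖ * ‖z‖ ^ (-((N : ℝ) + σ))) z

/-- Majorant for the outer integral. -/
def hout (N : ℕ) (σ ξ : ℝ) (z : Euc N) : ℝ :=
  (Ici ξ).indicator (fun r : ℝ => r ^ (-((N : ℝ) + σ))) ‖z‖

lemma hin_nonneg (σ ξ : ℝ) (z : Euc N) : 0 ≤ hin N σ ξ z :=
  indicator_nonneg (fun _ _ => by positivity) z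

lemma hout_nonneg (σ ξ : ℝ) (hξ : 0 < ξ) (z : Euc N) : 0 ≤ hout N σ ξ z :=
  indicator_nonneg (fun r hr => Real.rpow_nonneg (hξ.le.trans hr) _) _

lemma hin_integrable (σ ξ : ℝ) (hσ : σ ∈ Ioo (0 : ℝ) 1) (hξ : 0 < ξ) :
    Integrable (hin N σ ξ) (volume : Measure (Euc N)) := by
  rcases Nat.eq_zero_or_pos N with rfl | hN
  · exact Integrable.of_finite
  · haveI : Nonempty (Fin N) := ⟨⟨0, hN⟩⟩
    have h1 : IntegrableOn (fun x : Euc N => (fun r : ℝ => r * r ^ (-((N : ℝ) + σ))) ‖x‖)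
        (ball (0 : Euc N) ξ) volume := by
      refine (integrableOn_fun_norm_addHaar (μ := (volume : Measure (Euc N)))
        (f := fun r : ℝ => r * r ^ (-((N : ℝ) + σ))) (r := ξ)).2 ?_
      have h2 : IntegrableOn (fun y : ℝ => y ^ (-σ)) (Ioo 0 ξ) :=
        (intervalIntegral.integrableOn_Ioo_rpow_iff hξ).2 (by linarith [hσ.2])
      refine h2.congr_fun (fun y hy => ?_) measurableSet_Ioo
      have hy0 : 0 < y := hy.1
      simp only [finrank_euclideanSpace, Fintype.card_fin, smul_eq_mul]
      rw [← Real.rpow_natCast, Nat.cast_sub hN]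
      rw [← mul_assoc, ← Real.rpow_add_one hy0.ne', ← Real.rpow_add hy0]
      congr 1
      push_cast
      ring
    exact (integrable_indicator_iff measurableSet_ball).2 h1

lemma hout_integrable (σ ξ : ℝ) (hσ : σ ∈ Ioo (0 : ℝ) 1) (hξ : 0 < ξ) :
    Integrable (hout N σ ξ) (volume : Measure (Euc N)) := by
  rcases Nat.eq_zero_or_pos N with rfl | hN
  · exact Integrable.of_finite
  · haveI : Nonempty (Fin N) := ⟨⟨0, hN⟩⟩
    have h1 : Integrable (fun x : Euc N =>
        ((Ici ξ).indicator (fun r : ℝ => r ^ (-((N : ℝ) + σ)))) ‖x‖) volume := by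
      rw [integrable_fun_norm_addHaar]
      have h2 : IntegrableOn (fun y : ℝ => y ^ (-1 - σ)) (Ici ξ) :=
        (integrableOn_Ici_iff_integrableOn_Ioi (by simp)).2
          (integrableOn_Ioi_rpow_of_lt (by linarith [hσ.1]) hξ)
      have h3 : Integrable ((Ici ξ).indicator (fun y : ℝ => y ^ (-1 - σ))) :=
        (integrable_indicator_iff measurableSet_Ici).2 h2
      refine (h3.integrableOn (s := Ioi 0)).congr_fun (fun y hy => ?_) measurableSet_Ioi
      have hy0 : 0 < y := hy
      simp only [finrank_euclideanSpace, Fintype.card_fin, smul_eq_mul]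
      by_cases hyS : y ∈ Ici ξ
      · rw [indicator_of_mem hyS, indicator_of_mem hyS]
        rw [← Real.rpow_natCast, Nat.cast_sub hN, ← Real.rpow_add hy0]
        congr 1
        push_cast
        ring
      · rw [indicator_of_notMem hyS, indicator_of_notMem hyS, mul_zero]
    exact h1

lemma Iin_bound (Ω : Set (Euc N)) (g : Euc N → Euc N → ℝ) (Cμ σ : ℝ)
    (hM1 : AssumptionM1 Ω g Cμ σ) (j : Euc N → Euc N → Euc N) (Cj' Cj Dj : ℝ)
    (hJ1 : AssumptionJ1 Ω j Cj' Cj Dj) (ξ : ℝ) (hξ : 0 < ξ) (w : Euc N → ℝ) (x : Euc N)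
    (hx : x ∈ closure Ω) (L : ℝ) (hL : 0 ≤ L)
    (hw : ∀ a ∈ closure Ω, |w a - w x| ≤ L * ‖a - x‖) :
    |Iin Ω j g ξ w x| ≤ L * (Cj * Cμ * ∫ z, hin N σ ξ z) := by
  obtain ⟨hC, hσ, -, hg0, hgb⟩ := hM1
  obtain ⟨-, hCj, -, hj, -⟩ := hJ1
  have := abs_setIntegral_le_of_bound (μ := (volume : Measure (Euc N)))
    {z : Euc N | ‖z‖ < ξ ∧ x + j x z ∈ closure Ω}
    (fun z => (w (x + j x z) - w x) * g x z) (fun z => L * (Cj * Cμ) * hin N σ ξ z)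
    (fun z => mul_nonneg (by positivity) (hin_nonneg σ ξ z))
    ((hin_integrable σ ξ hσ hξ).const_mul _) (by
      rintro z ⟨hz, hzΩ⟩
      have h1 := hw _ hzΩ
      rw [add_sub_cancel_left] at h1
      have h2 := (hj x hx z).2
      have h3 := hgb x hx z
      have h4 : hin N σ ξ z = ‖z‖ * ‖z‖ ^ (-((N : ℝ) + σ)) :=
        indicator_of_mem (by simpa using hz) _
      rw [h4, abs_mul, abs_of_nonneg (hg0 x hx z)]
      calc |w (x + j x z) - w x| * g x z
          ≤ (L * (Cj * ‖z‖)) * (Cμ * ‖z‖ ^ (-((N : ℝ) + σ))) := by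
            refine mul_le_mul (h1.trans (by gcongr)) h3 (hg0 x hx z) (by positivity)
        _ = _ := by ring)
  rw [integral_const_mul] at this
  unfold Iin
  linarith

lemma Iout_bound (Ω : Set (Euc N)) (g : Euc N → Euc N → ℝ) (Cμ σ : ℝ)
    (hM1 : AssumptionM1 Ω g Cμ σ) (j : Euc N → Euc N → Euc N)
    (ξ : ℝ) (hξ : 0 < ξ) (w : Euc N → ℝ) (x : Euc N)
    (hx : x ∈ closure Ω) (M : ℝ) (hw : ∀ a ∈ closure Ω, |w a| ≤ M) :
    |Iout Ω j g ξ w x| ≤ M * (2 * Cμ * ∫ z, hout N σ ξ z) := by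
  obtain ⟨hC, hσ, -, hg0, hgb⟩ := hM1
  have hM : 0 ≤ M := (abs_nonneg _).trans (hw x hx)
  have := abs_setIntegral_le_of_bound (μ := (volume : Measure (Euc N)))
    {z : Euc N | ξ ≤ ‖z‖ ∧ x + j x z ∈ closure Ω}
    (fun z => (w (x + j x z) - w x) * g x z) (fun z => M * (2 * Cμ) * hout N σ ξ z)
    (fun z => mul_nonneg (by positivity) (hout_nonneg σ ξ hξ z))
    ((hout_integrable σ ξ hσ hξ).const_mul _) (by
      rintro z ⟨hz, hzΩ⟩
      have h1 : |w (x + j x z) - w x| ≤ M + M :=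
        (abs_sub _ _).trans (add_le_add (hw _ hzΩ) (hw x hx))
      have h3 := hgb x hx z
      have h4 : hout N σ ξ z = ‖z‖ ^ (-((N : ℝ) + σ)) :=
        indicator_of_mem (show ‖z‖ ∈ Ici ξ from hz) _
      rw [h4, abs_mul, abs_of_nonneg (hg0 x hx z)]
      calc |w (x + j x z) - w x| * g x z
          ≤ (M + M) * (Cμ * ‖z‖ ^ (-((N : ℝ) + σ))) := by
            refine mul_le_mul h1 h3 (hg0 x hx z) (by positivity)
        _ = _ := by ring)
  rw [integral_const_mul] at this
  unfold Iout
  linarith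

lemma sqrt_lip (a b e : ℝ) (ha : 0 ≤ a) (hb : 0 ≤ b) (he : 0 < e) :
    |Real.sqrt (a ^ 2 + e) - Real.sqrt (b ^ 2 + e)| ≤ |a - b| := by
  have key : ∀ a b : ℝ, 0 ≤ a → 0 ≤ b →
      Real.sqrt (a ^ 2 + e) ≤ Real.sqrt (b ^ 2 + e) + |a - b| := by
    intro a b ha hb
    apply Real.sqrt_le_iff.2
    refine ⟨by positivity, ?_⟩
    have h1 : Real.sqrt (b ^ 2 + e) ^ 2 = b ^ 2 + e := Real.sq_sqrt (by positivity)
    have h2 : b ≤ Real.sqrt (b ^ 2 + e) := Real.le_sqrt_of_sq_le (by linarith)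
    have h3 : a ≤ b + |a - b| := by linarith [le_abs_self (a - b)]
    have h4 : a ^ 2 ≤ (b + |a - b|) ^ 2 := by gcongr
    have h5 := mul_le_mul_of_nonneg_right h2 (abs_nonneg (a - b))
    nlinarith
  rw [abs_le]
  have h1 := key a b ha hb
  have h2 := key b a hb ha
  rw [abs_sub_comm b a] at h2
  constructor <;> linarith

/-- Lipschitz estimate for the test function. -/
lemma psi_lip (Ω : Set (Euc N)) (K : ℝ) (hK : 0 < K) (φ : Euc N → ℝ) (M : ℝ)
    (hφ : ∀ a b, |φ a - φ b| ≤ M * ‖a - b‖) (hM : 0 ≤ M) (d : Euc N → ℝ) (L : ℝ)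
    (hd : ∀ a ∈ closure Ω, ∀ b ∈ closure Ω, |d a - d b| ≤ L * ‖a - b‖)
    (ε : ℝ) (hε : ε ∈ Ioo (0 : ℝ) 1) (y : Euc N) (a : Euc N) (ha : a ∈ closure Ω)
    (x : Euc N) (hx : x ∈ closure Ω) :
    |(φ ((2:ℝ)⁻¹ • (a + y)) + ε⁻¹ * Real.sqrt (‖a - y‖ ^ 2 + ε ^ 4) + K * ε⁻¹ * |d a - d y|) -
      (φ ((2:ℝ)⁻¹ • (x + y)) + ε⁻¹ * Real.sqrt (‖x - y‖ ^ 2 + ε ^ 4) + K * ε⁻¹ * |d x - d y|)|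
      ≤ (ε⁻¹ * (M + 1 + K * L)) * ‖a - x‖ := by
  have he : 0 < ε := hε.1
  have he1 : 1 ≤ ε⁻¹ := (one_le_inv₀ he).2 hε.2.le
  have h1 := hφ ((2:ℝ)⁻¹ • (a + y)) ((2:ℝ)⁻¹ • (x + y))
  have h1' : ‖(2:ℝ)⁻¹ • (a + y) - (2:ℝ)⁻¹ • (x + y)‖ ≤ ‖a - x‖ := by
    rw [← smul_sub, add_sub_add_right_eq_sub, norm_smul]
    norm_num
    linarith [norm_nonneg (a - x)]
  have h1a : |φ ((2:ℝ)⁻¹ • (a + y)) - φ ((2:ℝ)⁻¹ • (x + y))| ≤ ε⁻¹ * (M * ‖a - x‖) := by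
    calc _ ≤ M * ‖a - x‖ := h1.trans (by gcongr)
      _ ≤ _ := le_mul_of_one_le_left (by positivity) he1
  have h2 : |Real.sqrt (‖a - y‖ ^ 2 + ε ^ 4) - Real.sqrt (‖x - y‖ ^ 2 + ε ^ 4)| ≤ ‖a - x‖ := by
    refine (sqrt_lip _ _ _ (norm_nonneg _) (norm_nonneg _) (by positivity)).trans ?_
    refine (abs_norm_sub_norm_le _ _).trans ?_
    rw [sub_sub_sub_cancel_right]
  have h3 : |(|d a - d y| - |d x - d y|)| ≤ L * ‖a - x‖ := by
    refine (abs_abs_sub_abs_le_abs_sub _ _).trans ?_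
    rw [sub_sub_sub_cancel_right]
    exact hd a ha x hx
  have h2a := mul_le_mul_of_nonneg_left h2 (zero_le_one.trans he1)
  have h3a := mul_le_mul_of_nonneg_left h3 (mul_nonneg hK.le (zero_le_one.trans he1))
  have hKe : 0 ≤ K * ε⁻¹ := by positivity
  have e1 : (φ ((2:ℝ)⁻¹ • (a + y)) + ε⁻¹ * Real.sqrt (‖a - y‖ ^ 2 + ε ^ 4)
        + K * ε⁻¹ * |d a - d y|) -
      (φ ((2:ℝ)⁻¹ • (x + y)) + ε⁻¹ * Real.sqrt (‖x - y‖ ^ 2 + ε ^ 4) + K * ε⁻¹ * |d x - d y|)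
      = (φ ((2:ℝ)⁻¹ • (a + y)) - φ ((2:ℝ)⁻¹ • (x + y)))
        + ε⁻¹ * (Real.sqrt (‖a - y‖ ^ 2 + ε ^ 4) - Real.sqrt (‖x - y‖ ^ 2 + ε ^ 4))
        + K * ε⁻¹ * (|d a - d y| - |d x - d y|) := by ring
  rw [e1]
  refine (abs_add_three _ _ _).trans ?_
  rw [abs_mul, abs_mul (K * ε⁻¹), abs_of_nonneg (zero_le_one.trans he1), abs_of_nonneg hKe]
  calc _ ≤ ε⁻¹ * (M * ‖a - x‖) + ε⁻¹ * ‖a - x‖ + K * ε⁻¹ * (L * ‖a - x‖) := by gcongr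
    _ = _ := by ring

/-- **Estimate of the truncated nonlocal terms (Lemma `estnonloclem`).**
With the density bound (first part of (M)) and (J1), for the nonsmooth test function
`ψ(x,y) = φ((x+y)/2) + ε⁻¹ χ_ε(|x-y|) + K ε⁻¹ |d(x) - d(y)|`
(with `χ_ε(r) = √(r² + ε⁴)`), every `ξ > 0` admits a constant `C₁ > 0`, independent of
`ε ∈ (0,1)`, such that for all `x, y ∈ closure Ω`:
(i)  `-I_ξ[ψ(·,y)](x) - I^ξ[u](x) ≥ -ε⁻¹ C₁ ξ^{1-σ} - C₁ ξ^{-σ}`, and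
(ii) `-I_ξ[-ψ(x,·)](y) - I^ξ[v](y) ≤ ε⁻¹ C₁ ξ^{1-σ} + C₁ ξ^{-σ}`. -/
theorem truncated_nonlocal_estimates
    (Ω : Set (Euc N)) (hΩ : IsOpen Ω)
    (g : Euc N → Euc N → ℝ) (Cμ σ : ℝ) (hM1 : AssumptionM1 Ω g Cμ σ)
    (j : Euc N → Euc N → Euc N) (Cj' Cj Dj : ℝ) (hJ1 : AssumptionJ1 Ω j Cj' Cj Dj)
    (K : ℝ) (hK : 0 < K)
    (φ : Euc N → ℝ) (hφ : ContDiff ℝ 1 φ) (hφ' : ∃ M, ∀ x, ‖gradient φ x‖ ≤ M)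
    (d : Euc N → ℝ) (hdb : ∃ M, ∀ x ∈ closure Ω, |d x| ≤ M)
    (hdlip : ∃ L : ℝ≥0, LipschitzOnWith L d (closure Ω))
    (hdsd : ∃ U : Set (Euc N), IsOpen U ∧ frontier Ω ⊆ U ∧
      ∀ x ∈ U ∩ closure Ω, d x = sdist Ω x)
    (u v : Euc N → ℝ)
    (hub : BddOn u (closure Ω)) (husc : UpperSemicontinuousOn u (closure Ω))
    (hvb : BddOn v (closure Ω)) (hlsc : LowerSemicontinuousOn v (closure Ω)) :
    ∀ ξ > (0:ℝ), ∃ C₁ > (0:ℝ), ∀ ε ∈ Ioo (0:ℝ) 1, ∀ x ∈ closure Ω, ∀ y ∈ closure Ω,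
      (-(ε⁻¹ * C₁ * ξ ^ (1 - σ)) - C₁ * ξ ^ (-σ) ≤
        -Iin Ω j g ξ (fun a => φ ((2:ℝ)⁻¹ • (a + y)) +
            ε⁻¹ * Real.sqrt (‖a - y‖ ^ 2 + ε ^ 4) + K * ε⁻¹ * |d a - d y|) x
          - Iout Ω j g ξ u x) ∧
      (-Iin Ω j g ξ (fun c => -(φ ((2:ℝ)⁻¹ • (x + c)) +
            ε⁻¹ * Real.sqrt (‖x - c‖ ^ 2 + ε ^ 4) + K * ε⁻¹ * |d x - d c|)) y
          - Iout Ω j g ξ v y ≤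
        ε⁻¹ * C₁ * ξ ^ (1 - σ) + C₁ * ξ ^ (-σ)) := by
  intro ξ hξ
  obtain ⟨M, hM⟩ := hφ'
  obtain ⟨L, hL⟩ := hdlip
  obtain ⟨Mu, hMu⟩ := hub
  obtain ⟨Mv, hMv⟩ := hvb
  have hM0 : 0 ≤ M := (norm_nonneg _).trans (hM 0)
  have hφL : ∀ a b, |φ a - φ b| ≤ M * ‖a - b‖ := by
    intro a b
    have hdiff : Differentiable ℝ φ := hφ.differentiable (by norm_num)
    have := Convex.norm_image_sub_le_of_norm_fderiv_le (𝕜 := ℝ) (s := (univ : Set (Euc N)))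
      (f := φ) (C := M) (x := b) (y := a) (fun x _ => hdiff x)
      (fun x _ => by
        have h := hM x
        rwa [gradient, LinearIsometryEquiv.norm_map] at h)
      convex_univ (mem_univ _) (mem_univ _)
    simpa [Real.norm_eq_abs] using this
  have hdL : ∀ a ∈ closure Ω, ∀ b ∈ closure Ω, |d a - d b| ≤ (L : ℝ) * ‖a - b‖ := by
    intro a ha b hb
    have := hL.dist_le_mul a ha b hb
    rwa [Real.dist_eq, dist_eq_norm] at this
  have hCμ : 0 < Cμ := hM1.1
  have hCj : 0 < Cj := hJ1.2.1
  have hG1 : 0 ≤ ∫ z, hin N σ ξ z := integral_nonneg (hin_nonneg σ ξ)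
  have hG2 : 0 ≤ ∫ z, hout N σ ξ z := integral_nonneg (hout_nonneg σ ξ hξ)
  set G1 := ∫ z, hin N σ ξ z
  set G2 := ∫ z, hout N σ ξ z
  set P := (M + 1 + K * (L : ℝ)) * (Cj * Cμ * G1) with hP
  set Q := (|Mu| + |Mv|) * (2 * Cμ * G2) with hQ
  have hP0 : 0 ≤ P := by positivity
  have hQ0 : 0 ≤ Q := by positivity
  have ha : 0 < ξ ^ (1 - σ) := Real.rpow_pos_of_pos hξ _
  have hb : 0 < ξ ^ (-σ) := Real.rpow_pos_of_pos hξ _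
  refine ⟨P / ξ ^ (1 - σ) + Q / ξ ^ (-σ) + 1, by positivity, ?_⟩
  set C₁ := P / ξ ^ (1 - σ) + Q / ξ ^ (-σ) + 1 with hC₁
  have hCP : P ≤ C₁ * ξ ^ (1 - σ) := by
    rw [← div_le_iff₀ ha, hC₁]
    have : 0 ≤ Q / ξ ^ (-σ) := by positivity
    linarith
  have hCQ : Q ≤ C₁ * ξ ^ (-σ) := by
    rw [← div_le_iff₀ hb, hC₁]
    have : 0 ≤ P / ξ ^ (1 - σ) := by positivity
    linarith
  intro ε hε x hx y hy
  have he : 0 < ε := hε.1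
  have hfac : 0 ≤ ε⁻¹ * (M + 1 + K * (L : ℝ)) := by positivity
  have heP : ε⁻¹ * P ≤ ε⁻¹ * C₁ * ξ ^ (1 - σ) := by
    rw [mul_assoc]
    gcongr
  have hQu : |Iout Ω j g ξ u x| ≤ Q := by
    refine (Iout_bound Ω g Cμ σ hM1 j ξ hξ u x hx |Mu|
      (fun a h => (hMu a h).trans (le_abs_self _))).trans ?_
    rw [hQ]
    gcongr
    linarith [abs_nonneg Mv]
  have hQv : |Iout Ω j g ξ v y| ≤ Q := by
    refine (Iout_bound Ω g Cμ σ hM1 j ξ hξ v y hy |Mv|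
      (fun a h => (hMv a h).trans (le_abs_self _))).trans ?_
    rw [hQ]
    gcongr
    linarith [abs_nonneg Mu]
  constructor
  · have h1 := Iin_bound Ω g Cμ σ hM1 j Cj' Cj Dj hJ1 ξ hξ
      (fun a => φ ((2:ℝ)⁻¹ • (a + y)) +
            ε⁻¹ * Real.sqrt (‖a - y‖ ^ 2 + ε ^ 4) + K * ε⁻¹ * |d a - d y|) x hx _ hfac
      (fun a ha => psi_lip Ω K hK φ M hφL hM0 d L hdL ε hε y a ha x hx)
    rw [mul_assoc ε⁻¹] at h1
    have h2 := (abs_le.1 h1).2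
    have h3 := (abs_le.1 hQu).2
    linarith
  · have h1 := Iin_bound Ω g Cμ σ hM1 j Cj' Cj Dj hJ1 ξ hξ
      (fun c => -(φ ((2:ℝ)⁻¹ • (x + c)) +
            ε⁻¹ * Real.sqrt (‖x - c‖ ^ 2 + ε ^ 4) + K * ε⁻¹ * |d x - d c|)) y hy _ hfac
      (fun c hc => by
        have h := psi_lip Ω K hK φ M hφL hM0 d L hdL ε hε x c hc y hy
        simp only [add_comm x, norm_sub_rev x, abs_sub_comm (d x)]
        rw [← abs_neg] at h
        convert h using 2
        ring)
    rw [mul_assoc ε⁻¹] at h1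
    have h2 := (abs_le.1 h1).1
    have h3 := (abs_le.1 hQv).1
    linarith

end Censored

end
end

section
/- Existence of a blow-up supersolution near Γ_in. Let Ω ⊂ ℝ^N be of class W^{2,∞}, assume (M), (J0), (J1), and let b : cl(Ω)×𝒜 → ℝ^N be the drift of a Bellman Hamiltonian, with 𝒜 compact and b continuous, bounded and Lipschitz in x uniformly in α. For every x̄ ∈ Γ_in there exist r = r(x̄) > 0 and a positive function U_r ∈ C²(B_r(x̄) ∩ Ω) such that for every ξ < C_j⁻¹ r/2: (i) −b(x,α)·DU_r(x) − I_ξ[U_r](x) ≥ 0 for all x ∈ B_{r/2}(x̄) ∩ Ω and all α ∈ 𝒜; (ii) U_r(x) ≥ 1/ω_r(d(x)) for all x ∈ B_r(x̄) ∩ Ω, for some non-negative continuous function ω_r that is strictly increasing in a neighbourhood of 0 with ω_r(0) = 0. -/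
set_option autoImplicit false

/- Common framework for censored nonlocal Hamilton–Jacobi equations with
Neumann boundary conditions (Barles-type viscosity solutions). -/

open Set Metric MeasureTheory Filter Topology Function
open scoped RealInnerProductSpace NNReal ENNReal

noncomputable section

namespace Censored

variable {N : ℕ}

open scoped Convolution in
lemma exists_mollified (d : Euc N → ℝ) (hd : LipschitzWith 2 d) (e x0 : Euc N) (R ε : ℝ)
    (hε0 : 0 ≤ ε)
    (hε : ∀ y ∈ ball x0 R, ∀ y' ∈ ball x0 R, |d y' - d y - ⟪e, y' - y⟫| ≤ ε * ‖y' - y‖)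
    (δ : ℝ) (hδ0 : 0 < δ) (hδ : δ ≤ R / 2) :
    ∃ D : Euc N → ℝ, ContDiff ℝ 2 D ∧ (∀ x, |D x - d x| ≤ 2 * δ) ∧
      ∀ y ∈ ball x0 (R / 2), ∀ y' ∈ ball x0 (R / 2),
        |D y' - D y - ⟪e, y' - y⟫| ≤ ε * ‖y' - y‖ := by
  let φ : ContDiffBump (0 : Euc N) := ⟨δ / 2, δ, by linarith, by linarith⟩
  have hφ : φ.rOut = δ := rfl
  have hcd := hd.continuous
  have hsupp : support (φ.normed volume) ⊆ ball 0 δ := by rw [φ.support_normed_eq]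
  let L := ContinuousLinearMap.lsmul ℝ ℝ (E := ℝ)
  have hex : ∀ f : Euc N → ℝ, Continuous f → ConvolutionExists (φ.normed volume) f L volume := by
    intro f hf
    exact φ.hasCompactSupport_normed.convolutionExists_left L φ.continuous_normed
      (hf.locallyIntegrable)
  refine ⟨(φ.normed volume) ⋆[L, volume] d, ?_, ?_, ?_⟩
  · exact φ.hasCompactSupport_normed.contDiff_convolution_left (n := 2) _ φ.contDiff_normed hcd.locallyIntegrable
  · intro x
    rw [← Real.dist_eq]
    refine φ.dist_normed_convolution_le hcd.aestronglyMeasurable ?_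
    intro y hy
    have := hd.dist_le_mul y x
    rw [hφ, mem_ball] at hy
    simp at this
    linarith
  · intro y hy y' hy'
    set w := y' - y with hw
    have h1 : ((φ.normed volume) ⋆[L, volume] d) y' - ((φ.normed volume) ⋆[L, volume] d) y
        = ((φ.normed volume) ⋆[L, volume] (fun u => d (u + w) - d u)) y := by
      simp only [convolution_def]
      rw [← integral_sub (hex d hcd y') (hex d hcd y)]
      congr 1
      ext t
      simp only [L, ContinuousLinearMap.lsmul_apply, smul_eq_mul]
      rw [show y - t + w = y' - t by rw [hw]; abel]
      ring
    rw [h1, ← Real.dist_eq]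
    refine dist_convolution_le (by positivity) hsupp φ.nonneg_normed φ.integral_normed
      (by fun_prop) ?_
    intro u hu
    rw [Real.dist_eq]
    have := hε u ?_ (u + w) ?_
    · simpa using this
    · rw [mem_ball] at *
      have := dist_triangle u y x0
      linarith
    · rw [mem_ball] at *
      have := dist_triangle (u + w) y' x0
      have h2 : dist (u + w) y' = dist u y := by
        rw [dist_eq_norm, dist_eq_norm, hw]; congr 1; abel
      linarith

lemma kernel_finite (hN : 0 < N) (κ : ℝ) (hκ : 0 < κ) :
    ∫⁻ z in ball (0 : Euc N) 1, ENNReal.ofReal (‖z‖ ^ (κ - N)) < ∞ := by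
  haveI : Nonempty (Fin N) := ⟨⟨0, hN⟩⟩
  have h := (integrableOn_fun_norm_addHaar (volume : Measure (Euc N)) (f := fun t : ℝ => t ^ (κ - N)) (r := 1)).2 (by
    have h2 : IntegrableOn (fun t : ℝ => t ^ (κ - 1)) (Ioo 0 1) :=
      ((intervalIntegral.integrableOn_Ioo_rpow_iff (s := κ - 1) (t := 1) one_pos).2 (by linarith))
    refine h2.congr_fun ?_ measurableSet_Ioo
    intro t ht
    simp only [smul_eq_mul, finrank_euclideanSpace, Fintype.card_fin]
    rw [← Real.rpow_natCast, ← Real.rpow_add ht.1, Nat.cast_sub hN]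
    congr 1; push_cast; ring)
  have := h.lintegral_lt_top
  exact this

lemma slab_pointwise (hN : 0 < N) (σ κ : ℝ) (hσ : 0 < σ) (hκ : 0 < κ) (hκ1 : κ < 1)
    (e : Euc N) (he : ‖e‖ = 1) (δ s : ℝ) (hδ : 0 < δ) (hs : 0 ≤ s) (hs8 : s ≤ δ / 8)
    (y : Euc N) (hy : δ / 4 ≤ ‖y‖) :
    ‖y‖ ^ (-((N : ℝ) + σ)) ≤ ((δ / 4) ^ (-(σ + κ)) * 2 ^ N) * ‖y + s • e‖ ^ (κ - N) := by
  have hN1 : (1 : ℝ) ≤ N := by exact_mod_cast hN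
  have hse : ‖s • e‖ = s := by rw [norm_smul, he, mul_one, Real.norm_of_nonneg hs]
  have hy0 : 0 < ‖y‖ := by linarith
  have h1 : ‖y + s • e‖ ≤ 2 * ‖y‖ := by
    have := norm_add_le y (s • e); linarith
  have h2 : 0 < ‖y + s • e‖ := by
    have : ‖y‖ ≤ ‖y + s • e‖ + ‖s • e‖ := by
      simpa using norm_sub_le (y + s • e) (s • e)
    linarith
  have h3 : ‖y‖ ^ (-((N : ℝ) + σ)) = ‖y‖ ^ (-(σ + κ)) * ‖y‖ ^ (κ - N) := by
    rw [← Real.rpow_add hy0]; congr 1; ring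
  have h4 : ‖y‖ ^ (-(σ + κ)) ≤ (δ / 4) ^ (-(σ + κ)) :=
    Real.rpow_le_rpow_of_nonpos (by linarith) hy (by linarith)
  have h5 : ‖y‖ ^ (κ - N) ≤ 2 ^ N * ‖y + s • e‖ ^ (κ - N) := by
    calc ‖y‖ ^ (κ - N) ≤ (2⁻¹ * ‖y + s • e‖) ^ (κ - N) :=
          Real.rpow_le_rpow_of_nonpos (by positivity) (by linarith) (by linarith)
      _ = (2 : ℝ) ^ ((N : ℝ) - κ) * ‖y + s • e‖ ^ (κ - N) := by
          rw [Real.mul_rpow (by norm_num) h2.le, Real.inv_rpow (by norm_num),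
            ← Real.rpow_neg (by norm_num)]
          congr 2; ring
      _ ≤ _ := by
          gcongr
          rw [← Real.rpow_natCast]
          exact Real.rpow_le_rpow_of_exponent_le (by norm_num) (by linarith)
  rw [h3, mul_assoc]
  exact mul_le_mul h4 h5 (by positivity) (by positivity)

lemma slab (hN : 0 < N) (σ κ : ℝ) (hσ : 0 < σ) (hκ : 0 < κ) (hκ1 : κ < 1)
    (e : Euc N) (he : ‖e‖ = 1) (δ t ρ : ℝ) (ht : 0 < t) (hδ : 128 * t ≤ δ) (hρ : ρ + δ / 8 ≤ 1)
    (q : Euc N → ℝ)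
    (hq : ∀ y ∈ ball (0 : Euc N) ρ, ∀ y' ∈ ball (0 : Euc N) ρ, ∀ s : ℝ, 0 ≤ s → y = y' + s • e →
      q y' + s / 2 ≤ q y)
    (S : Set (Euc N)) (hSm : MeasurableSet S)
    (hS : ∀ w ∈ S, w ∈ ball (0 : Euc N) ρ ∧ δ / 4 ≤ ‖w‖ ∧ 0 ≤ q w ∧ q w ≤ 5 * t) :
    ∫⁻ y in S, ENNReal.ofReal (‖y‖ ^ (-((N : ℝ) + σ))) ≤
      ENNReal.ofReal (176 * t / δ * ((δ / 4) ^ (-(σ + κ)) * 2 ^ N)) *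
        ∫⁻ z in ball (0 : Euc N) 1, ENNReal.ofReal (‖z‖ ^ (κ - N)) := by
  have hδ0 : 0 < δ := by linarith
  set c : ℝ := (δ / 4) ^ (-(σ + κ)) * 2 ^ N with hc
  have hc0 : 0 ≤ c := by positivity
  set h : ℝ := 11 * t with hh
  set m : ℕ := ⌊δ / (88 * t)⌋₊ with hm
  have hu1 : 1 ≤ δ / (88 * t) := by rw [le_div_iff₀ (by positivity)]; linarith
  have hm1 : (m : ℝ) ≤ δ / (88 * t) := Nat.floor_le (by positivity)
  have hm2 : δ / (88 * t) < m + 1 := Nat.lt_floor_add_one _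
  have hm3 : 1 ≤ m := by rw [hm]; exact Nat.le_floor (by simpa using hu1)
  have hm3' : (1 : ℝ) ≤ m := by exact_mod_cast hm3
  have hmh : m * h ≤ δ / 8 := by
    rw [le_div_iff₀ (by positivity)] at hm1; rw [hh]; linarith
  set P : Euc N → ℝ≥0∞ := (ball (0 : Euc N) 1).indicator
    (fun z => ENNReal.ofReal (‖z‖ ^ (κ - N))) with hP
  have hPm : Measurable P := by
    refine Measurable.indicator ?_ measurableSet_ball
    fun_prop
  set K : Euc N → ℝ≥0∞ := fun y => ENNReal.ofReal (‖y‖ ^ (-((N : ℝ) + σ))) with hK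
  have hshift : ∀ i ∈ Finset.range m, ∫⁻ y in S, K y ≤
      ∫⁻ w, ENNReal.ofReal c * (S.indicator 1 (w - ((i : ℝ) * h) • e) * P w) := by
    intro i hi
    have hi' : (i : ℝ) ≤ m := by exact_mod_cast (Finset.mem_range.1 hi).le
    have hs0 : 0 ≤ (i : ℝ) * h := by positivity
    have hs8 : (i : ℝ) * h ≤ δ / 8 := (mul_le_mul_of_nonneg_right hi' (by positivity)).trans hmh
    rw [← lintegral_indicator hSm, ← lintegral_add_right_eq_self
      (fun w => ENNReal.ofReal c * (S.indicator 1 (w - ((i : ℝ) * h) • e) * P w))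
      (((i : ℝ) * h) • e)]
    refine lintegral_mono ?_
    intro y
    by_cases hyS : y ∈ S
    · obtain ⟨h1, h2, h3, h4⟩ := hS y hyS
      have hb : y + ((i : ℝ) * h) • e ∈ ball (0 : Euc N) 1 := by
        rw [mem_ball_zero_iff] at *
        have := norm_add_le y (((i : ℝ) * h) • e)
        rw [norm_smul, he, Real.norm_of_nonneg hs0] at this
        linarith
      simp only [add_sub_cancel_right, indicator_of_mem hyS, hP, indicator_of_mem hb, hK,
        Pi.one_apply, one_mul]
      rw [← ENNReal.ofReal_mul hc0]
      exact ENNReal.ofReal_le_ofReal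
        (slab_pointwise hN σ κ hσ hκ hκ1 e he δ _ hδ0 hs0 hs8 y h2)
    · simp [hyS]
  have hsum : (m : ℝ≥0∞) * ∫⁻ y in S, K y ≤ ENNReal.ofReal c * ∫⁻ w, P w := by
    calc (m : ℝ≥0∞) * ∫⁻ y in S, K y = ∑ i ∈ Finset.range m, ∫⁻ y in S, K y := by simp
      _ ≤ ∑ i ∈ Finset.range m,
          ∫⁻ w, ENNReal.ofReal c * (S.indicator 1 (w - ((i : ℝ) * h) • e) * P w) :=
          Finset.sum_le_sum hshift
      _ = ∫⁻ w, ∑ i ∈ Finset.range m,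
            ENNReal.ofReal c * (S.indicator 1 (w - ((i : ℝ) * h) • e) * P w) := by
          rw [lintegral_finsetSum]
          intro i _
          refine Measurable.const_mul (Measurable.mul ?_ hPm) _
          exact (measurable_one.indicator hSm).comp (by fun_prop)
      _ ≤ ∫⁻ w, ENNReal.ofReal c * P w := by
          refine lintegral_mono ?_
          intro w
          simp only
          rw [← Finset.mul_sum, ← Finset.sum_mul]
          gcongr
          refine (mul_le_mul_left (?_ : _ ≤ (1 : ℝ≥0∞)) (P w)).trans_eq (one_mul _)
          by_cases hex : ∃ i ∈ Finset.range m, w - ((i : ℝ) * h) • e ∈ S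
          · obtain ⟨i, hi, hiS⟩ := hex
            have hlt : ∀ a b : ℕ, a < b → w - ((a : ℝ) * h) • e ∈ S →
                w - ((b : ℝ) * h) • e ∈ S → False := by
              intro a b hab ha hb
              obtain ⟨a1, a2, a3, a4⟩ := hS _ ha
              obtain ⟨b1, b2, b3, b4⟩ := hS _ hb
              have hab' : (a : ℝ) + 1 ≤ b := by exact_mod_cast hab
              have hmul : h ≤ ((b : ℝ) - a) * h := by
                have : 0 < h := by positivity
                nlinarith
              have := hq _ a1 _ b1 (((b : ℝ) - a) * h) (by
                have : 0 < h := by positivity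
                linarith) (by
                rw [sub_mul, sub_smul]; abel)
              rw [hh] at hmul
              linarith
            rw [Finset.sum_eq_single i]
            · simp [hiS]
            · intro k _ hki
              refine indicator_of_notMem ?_ _
              intro hk
              rcases lt_or_gt_of_ne hki with h1 | h1
              · exact hlt _ _ h1 hk hiS
              · exact hlt _ _ h1 hiS hk
            · intro hn; exact absurd hi hn
          · push Not at hex
            rw [Finset.sum_eq_zero]
            · simp
            · intro i hi
              exact indicator_of_notMem (hex i hi) _
      _ = _ := lintegral_const_mul _ hPm
  have hPK : ∫⁻ w, P w = ∫⁻ z in ball (0 : Euc N) 1, ENNReal.ofReal (‖z‖ ^ (κ - N)) := by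
    rw [hP, lintegral_indicator measurableSet_ball]
  rw [hPK] at hsum
  have hone : (1 : ℝ≥0∞) ≤ ENNReal.ofReal (176 * t / δ) * m := by
    rw [← ENNReal.ofReal_natCast m, ← ENNReal.ofReal_mul (by positivity), ENNReal.one_le_ofReal,
      div_mul_eq_mul_div, one_le_div hδ0]
    rw [div_lt_iff₀ (by positivity)] at hm2
    nlinarith
  calc ∫⁻ y in S, K y = 1 * ∫⁻ y in S, K y := (one_mul _).symm
    _ ≤ ENNReal.ofReal (176 * t / δ) * m * ∫⁻ y in S, K y := mul_le_mul_left hone _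
    _ = ENNReal.ofReal (176 * t / δ) * (m * ∫⁻ y in S, K y) := mul_assoc _ _ _
    _ ≤ ENNReal.ofReal (176 * t / δ) * (ENNReal.ofReal c * _) := mul_le_mul_right hsum _
    _ = _ := by rw [← mul_assoc, ← ENNReal.ofReal_mul (by positivity)]

lemma cov_le (J : Euc N → Euc N) (hbij : Bijective J)
    (hC : ContDiff ℝ 1 (invFun J)) (Aj Bd : ℝ) (hA : ∀ z, ‖fderiv ℝ (invFun J) z‖ ≤ Aj)
    (hBd : ∀ L : Euc N →L[ℝ] Euc N, ‖L‖ ≤ Aj → |L.det| ≤ Bd)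
    (S : Set (Euc N)) (hS : MeasurableSet S) (h : Euc N → ℝ≥0∞) :
    ∫⁻ z in J ⁻¹' S, h (J z) ≤ ENNReal.ofReal Bd * ∫⁻ w in S, h w := by
  have hl : LeftInverse (invFun J) J := leftInverse_invFun hbij.1
  have hr : Function.RightInverse (invFun J) J := rightInverse_invFun hbij.2
  have him : J ⁻¹' S = invFun J '' S := by
    ext z
    constructor
    · intro hz; exact ⟨J z, hz, hl z⟩
    · rintro ⟨w, hw, rfl⟩; rw [mem_preimage, hr w]; exact hw
  rw [him, lintegral_image_eq_lintegral_abs_det_fderiv_mul volume hS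
    (fun x _ => (hC.differentiable (by norm_num) x).hasFDerivAt.hasFDerivWithinAt)
    (hr.injective.injOn)]
  rw [← lintegral_const_mul' _ _ ENNReal.ofReal_ne_top]
  refine lintegral_mono ?_
  intro w
  simp only
  rw [hr w]
  exact mul_le_mul_left (ENNReal.ofReal_le_ofReal (hBd _ (hA w))) _

lemma exists_det_bound (Aj : ℝ) :
    ∃ Bd : ℝ, 0 ≤ Bd ∧ ∀ L : Euc N →L[ℝ] Euc N, ‖L‖ ≤ Aj → |L.det| ≤ Bd := by
  obtain ⟨B, hB⟩ := (isCompact_closedBall (0 : Euc N →L[ℝ] Euc N) Aj).exists_bound_of_continuousOn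
    (f := fun L : Euc N →L[ℝ] Euc N => L.det) ContinuousLinearMap.continuous_det.continuousOn
  refine ⟨max B 0, le_max_right _ _, fun L hL => ?_⟩
  exact (hB L (by simpa using hL)).trans (le_max_left _ _)

lemma integral_le_of_lintegral {α : Type*} [MeasurableSpace α] (μ : Measure α) (h : α → ℝ) (B : ℝ)
    (hB : 0 ≤ B) (hh : ∫⁻ z, ENNReal.ofReal (h z) ∂μ ≤ ENNReal.ofReal B) : ∫ z, h z ∂μ ≤ B := by
  by_cases hi : Integrable h μ
  · rw [integral_eq_lintegral_pos_part_sub_lintegral_neg_part hi]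
    have h1 := ENNReal.toReal_mono ENNReal.ofReal_ne_top hh
    rw [ENNReal.toReal_ofReal hB] at h1
    have h2 : 0 ≤ (∫⁻ z, ENNReal.ofReal (-h z) ∂μ).toReal := ENNReal.toReal_nonneg
    linarith
  · rw [integral_undef hi]; exact hB


/-- The `C²` cubic profile used to build the blow-up function. -/
def prof (s : ℝ) : ℝ := (max 0 (4 - s)) ^ 3

lemma prof_nonneg (s : ℝ) : 0 ≤ prof s := by unfold prof; positivity

lemma prof_anti {a b : ℝ} (h : a ≤ b) : prof b ≤ prof a := by
  unfold prof; gcongr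

lemma prof_le {s : ℝ} (h : -1 ≤ s) : prof s ≤ 125 := by
  unfold prof
  have h1 : max 0 (4 - s) ≤ 5 := max_le (by norm_num) (by linarith)
  calc (max 0 (4 - s)) ^ 3 ≤ 5 ^ 3 := by gcongr
    _ = 125 := by norm_num

lemma prof_zero {s : ℝ} (h : 4 ≤ s) : prof s = 0 := by
  unfold prof; rw [max_eq_left (by linarith)]; norm_num

lemma prof_ge {s : ℝ} (h : s ≤ 3) : 1 ≤ prof s := by
  unfold prof
  have h1 : 1 ≤ max 0 (4 - s) := le_max_of_le_right (by linarith)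
  exact one_le_pow₀ h1

lemma prof_lip {a b : ℝ} (ha : -1 ≤ a) (hb : -1 ≤ b) : prof a - prof b ≤ 75 * |a - b| := by
  unfold prof
  set p := max 0 (4 - a) with hp
  set q := max 0 (4 - b) with hq
  have hp0 : 0 ≤ p := le_max_left _ _
  have hq0 : 0 ≤ q := le_max_left _ _
  have hp5 : p ≤ 5 := max_le (by norm_num) (by linarith)
  have hq5 : q ≤ 5 := max_le (by norm_num) (by linarith)
  have h1 : |p - q| ≤ |a - b| := by
    have := abs_max_sub_max_le_abs (4 - a) (4 - b) 0
    rw [max_comm _ (0:ℝ), max_comm _ (0:ℝ)] at this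
    refine this.trans_eq ?_
    rw [← abs_neg]; congr 1; ring
  have h2 : p ^ 3 - q ^ 3 = (p - q) * (p ^ 2 + p * q + q ^ 2) := by ring
  have h3 : p ^ 2 + p * q + q ^ 2 ≤ 75 := by nlinarith
  have h4 : 0 ≤ p ^ 2 + p * q + q ^ 2 := by positivity
  rw [h2]
  calc (p - q) * (p ^ 2 + p * q + q ^ 2) ≤ |p - q| * (p ^ 2 + p * q + q ^ 2) := by
        gcongr; exact le_abs_self _
    _ ≤ |a - b| * 75 := by gcongr
    _ = _ := mul_comm _ _

lemma prof_decr {s h : ℝ} (hs : s ≤ 3) (h0 : 0 ≤ h) (h1 : h ≤ 1) : prof (s + h) ≤ prof s - h := by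
  unfold prof
  rw [max_eq_right (by linarith), max_eq_right (by linarith)]
  have hp : 1 ≤ 4 - s := by linarith
  set p := 4 - s with hp'
  rw [show 4 - (s + h) = p - h by rw [hp']; ring]
  have : p ^ 3 - (p - h) ^ 3 = h * (p ^ 2 + p * (p - h) + (p - h) ^ 2) := by ring
  have h3 : 1 ≤ p ^ 2 + p * (p - h) + (p - h) ^ 2 := by nlinarith [mul_nonneg (by linarith : 0 ≤ p) (by linarith : 0 ≤ p - h)]
  nlinarith

lemma prof_contDiff : ContDiff ℝ 2 prof := by
  have hm : ∀ x : ℝ, HasDerivAt (fun x : ℝ => (max 0 x) ^ 3) (3 * (max 0 x) ^ 2) x := by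
    intro x
    rcases lt_trichotomy x 0 with h | h | h
    · rw [max_eq_left h.le]
      have : (fun x : ℝ => (max 0 x) ^ 3) =ᶠ[𝓝 x] fun _ => 0 := by
        filter_upwards [Iio_mem_nhds h] with y hy
        rw [max_eq_left (le_of_lt hy)]; norm_num
      simpa using (hasDerivAt_const x (0:ℝ)).congr_of_eventuallyEq this
    · subst h
      simp only [max_self]
      rw [hasDerivAt_iff_isLittleO_nhds_zero]
      simp only [zero_add, max_self, ne_eq, OfNat.ofNat_ne_zero, not_false_eq_true, zero_pow,
        mul_zero, smul_zero, sub_zero]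
      have : (fun h : ℝ => h ^ 3) =o[𝓝 0] fun h => h := by
        simpa using Asymptotics.isLittleO_pow_pow (𝕜 := ℝ) (m := 1) (n := 3) (by norm_num)
      refine Asymptotics.IsBigO.trans_isLittleO ?_ this
      refine Asymptotics.IsBigO.of_bound 1 (Eventually.of_forall fun h => ?_)
      simp only [norm_pow, Real.norm_eq_abs]
      have h1 : |max 0 h| ≤ |h| := by
        rw [abs_of_nonneg (le_max_left _ _)]; exact max_le (abs_nonneg _) (le_abs_self _)
      have : |max 0 h| ^ 3 ≤ |h| ^ 3 := by gcongr
      simpa using this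
    · rw [max_eq_right h.le]
      have : (fun x : ℝ => (max 0 x) ^ 3) =ᶠ[𝓝 x] fun x => x ^ 3 := by
        filter_upwards [Ioi_mem_nhds h] with y hy
        rw [max_eq_right (le_of_lt hy)]
      simpa using (hasDerivAt_pow 3 x).congr_of_eventuallyEq this
  have hm2 : ∀ x : ℝ, HasDerivAt (fun x : ℝ => 3 * (max 0 x) ^ 2) (6 * (max 0 x)) x := by
    intro x
    rcases lt_trichotomy x 0 with h | h | h
    · rw [max_eq_left h.le]
      have : (fun x : ℝ => 3 * (max 0 x) ^ 2) =ᶠ[𝓝 x] fun _ => 0 := by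
        filter_upwards [Iio_mem_nhds h] with y hy
        rw [max_eq_left (le_of_lt hy)]; norm_num
      simpa using (hasDerivAt_const x (0:ℝ)).congr_of_eventuallyEq this
    · subst h
      simp only [max_self]
      rw [hasDerivAt_iff_isLittleO_nhds_zero]
      simp only [zero_add, max_self, ne_eq, OfNat.ofNat_ne_zero, not_false_eq_true, zero_pow,
        mul_zero, smul_zero, sub_zero]
      have : (fun h : ℝ => h ^ 2) =o[𝓝 0] fun h => h := by
        simpa using Asymptotics.isLittleO_pow_pow (𝕜 := ℝ) (m := 1) (n := 2) (by norm_num)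
      refine Asymptotics.IsBigO.trans_isLittleO ?_ this
      refine Asymptotics.IsBigO.of_bound 3 (Eventually.of_forall fun h => ?_)
      have h1 : |max 0 h| ≤ |h| := by
        rw [abs_of_nonneg (le_max_left _ _)]; exact max_le (abs_nonneg _) (le_abs_self _)
      have : |max 0 h| ^ 2 ≤ |h| ^ 2 := by gcongr
      simpa using this
    · rw [max_eq_right h.le]
      have : (fun x : ℝ => 3 * (max 0 x) ^ 2) =ᶠ[𝓝 x] fun x => 3 * x ^ 2 := by
        filter_upwards [Ioi_mem_nhds h] with y hy
        rw [max_eq_right (le_of_lt hy)]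
      refine HasDerivAt.congr_of_eventuallyEq ?_ this
      have h9 := (hasDerivAt_pow 2 x).const_mul 3
      have h10 : 6 * x = 3 * (((2 : ℕ) : ℝ) * x ^ (2 - 1)) := by norm_num; ring
      rw [h10]; exact h9
  have hc : ContDiff ℝ 2 (fun x : ℝ => (max 0 x) ^ 3) := by
    rw [show (2 : WithTop ℕ∞) = 1 + 1 by norm_num, contDiff_succ_iff_deriv]
    refine ⟨fun x => (hm x).differentiableAt, by simp, ?_⟩
    rw [show deriv (fun x : ℝ => (max 0 x) ^ 3) = fun x => 3 * (max 0 x) ^ 2 from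
      funext fun x => (hm x).deriv]
    rw [contDiff_one_iff_deriv]
    refine ⟨fun x => (hm2 x).differentiableAt, ?_⟩
    rw [show deriv (fun x : ℝ => 3 * (max 0 x) ^ 2) = fun x => 6 * (max 0 x) from
      funext fun x => (hm2 x).deriv]
    fun_prop
  exact hc.comp (contDiff_const.sub contDiff_id)

lemma termA (hN : 0 < N) (σ κ Cμ Cj T : ℝ) (hσ : 0 < σ) (hκ : 0 < κ) (hτ : σ + κ ≤ 1)
    (hCμ : 0 < Cμ) (hCj : 0 < Cj) (hT : 0 < T)
    (x : Euc N) (J : Euc N → Euc N) (gx : Euc N → ℝ) (D d : Euc N → ℝ) (Z : Set (Euc N))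
    (hZm : MeasurableSet Z) (hZ1 : ∀ z ∈ Z, ‖z‖ < 1)
    (hZd : ∀ z ∈ Z, 0 ≤ d (x + J z)) (hdx : 0 ≤ d x)
    (hJ : ∀ z, ‖J z‖ ≤ Cj * ‖z‖) (hg0 : ∀ z, 0 ≤ gx z)
    (hg : ∀ z, gx z ≤ Cμ * ‖z‖ ^ (-((N : ℝ) + σ)))
    (hDd : ∀ y, |D y - d y| ≤ 1 / T) (hDl : ∀ z ∈ Z, |D (x + J z) - D x| ≤ 2 * ‖J z‖) :
    ∫⁻ z in Z, ENNReal.ofReal ((prof (T * D (x + J z)) - prof (T * D x)) * gx z) ≤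
      ENNReal.ofReal (150 * (2 * T * Cj) ^ (σ + κ) * Cμ) *
        ∫⁻ z in ball (0 : Euc N) 1, ENNReal.ofReal (‖z‖ ^ (κ - N)) := by
  have hN1 : (1 : ℝ) ≤ N := by exact_mod_cast hN
  rw [← lintegral_const_mul' _ _ ENNReal.ofReal_ne_top]
  have hlow : ∀ y, 0 ≤ d y → -1 ≤ T * D y := by
    intro y hy
    have h1 := (abs_le.1 (hDd y)).1
    have h2 : -(1 / T) ≤ D y := by linarith
    have := mul_le_mul_of_nonneg_left h2 hT.le
    have h3 : T * (-(1 / T)) = -1 := by field_simp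
    linarith
  calc _ ≤ ∫⁻ z in Z, ENNReal.ofReal (150 * (2 * T * Cj) ^ (σ + κ) * Cμ) *
        ENNReal.ofReal (‖z‖ ^ (κ - N)) := by
        refine setLIntegral_mono' hZm ?_
        intro z hz
        rw [← ENNReal.ofReal_mul (by positivity)]
        refine ENNReal.ofReal_le_ofReal ?_
        rcases eq_or_ne z 0 with h0 | h0
        · have h1 : gx z = 0 := by
            refine le_antisymm ((hg z).trans ?_) (hg0 z)
            rw [h0, norm_zero, Real.zero_rpow (by linarith)]; simp
          rw [h1, mul_zero]; positivity
        · have hz0 : 0 < ‖z‖ := norm_pos_iff.2 h0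
          set u := 2 * T * Cj * ‖z‖ with hu
          have hu0 : 0 < u := by positivity
          have hdiff : prof (T * D (x + J z)) - prof (T * D x) ≤ 150 * u ^ (σ + κ) := by
            have ha := hlow _ (hZd z hz)
            have hb := hlow _ hdx
            rcases le_total 1 u with h1 | h1
            · have h2 : 1 ≤ u ^ (σ + κ) := Real.one_le_rpow h1 (by linarith)
              have h3 := prof_le ha
              have h4 := prof_nonneg (T * D x)
              linarith
            · have h2 : u ≤ u ^ (σ + κ) := by
                conv_lhs => rw [← Real.rpow_one u]
                exact Real.rpow_le_rpow_of_exponent_ge hu0 h1 hτ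
              have h3 := prof_lip ha hb
              rw [← mul_sub, abs_mul, abs_of_pos hT] at h3
              have h4 : T * |D (x + J z) - D x| ≤ T * (2 * (Cj * ‖z‖)) := by
                gcongr; exact (hDl z hz).trans (by linarith [hJ z])
              have h5 : T * (2 * (Cj * ‖z‖)) = u := by rw [hu]; ring
              linarith
          calc (prof (T * D (x + J z)) - prof (T * D x)) * gx z
              ≤ (150 * u ^ (σ + κ)) * (Cμ * ‖z‖ ^ (-((N : ℝ) + σ))) :=
                mul_le_mul hdiff (hg z) (hg0 z) (by positivity)
            _ = _ := by
              have hk : ‖z‖ ^ (κ - N) = ‖z‖ ^ (σ + κ) * ‖z‖ ^ (-((N : ℝ) + σ)) := by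
                rw [← Real.rpow_add hz0]; congr 1; ring
              rw [hu, Real.mul_rpow (by positivity) hz0.le, hk]
              generalize ‖z‖ ^ (σ + κ) = a1
              generalize ‖z‖ ^ (-((N : ℝ) + σ)) = a2
              generalize (2 * T * Cj) ^ (σ + κ) = a3
              ring
    _ ≤ _ := lintegral_mono_set (fun z hz => by simpa using hZ1 z hz)

lemma termB (hN : 0 < N) (σ κ Cμ Cj T δ ρ Aj Bd : ℝ) (hσ : 0 < σ) (hκ : 0 < κ) (hκ1 : κ < 1)
    (hCμ : 0 < Cμ) (hCj : 0 < Cj) (hT : 0 < T)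
    (x e : Euc N) (he : ‖e‖ = 1)
    (J : Euc N → Euc N) (gx : Euc N → ℝ) (D d : Euc N → ℝ) (Z : Set (Euc N))
    (hZm : MeasurableSet Z) (hZρ : ∀ z ∈ Z, ‖J z‖ < ρ)
    (hZd : ∀ z ∈ Z, 0 ≤ d (x + J z)) (hdx : d x = δ) (hδ : 128 * (1 / T) ≤ δ)
    (hρ : ρ + δ / 8 ≤ 1)
    (hJ : ∀ z, ‖J z‖ ≤ Cj * ‖z‖) (hg0 : ∀ z, 0 ≤ gx z)
    (hg : ∀ z, gx z ≤ Cμ * ‖z‖ ^ (-((N : ℝ) + σ)))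
    (hDd : ∀ y, |D y - d y| ≤ 1 / T) (hlip : LipschitzWith 2 d)
    (hq : ∀ y ∈ ball (0 : Euc N) ρ, ∀ y' ∈ ball (0 : Euc N) ρ, ∀ s : ℝ, 0 ≤ s → y = y' + s • e →
      d (x + y') + s / 2 ≤ d (x + y))
    (hbij : Bijective J) (hJc : Continuous J)
    (hC : ContDiff ℝ 1 (invFun J)) (hA : ∀ z, ‖fderiv ℝ (invFun J) z‖ ≤ Aj)
    (hBd0 : 0 ≤ Bd) (hBd : ∀ L : Euc N →L[ℝ] Euc N, ‖L‖ ≤ Aj → |L.det| ≤ Bd) :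
    ∫⁻ z in Z, ENNReal.ofReal ((prof (T * D (x + J z)) - prof (T * D x)) * gx z) ≤
      ENNReal.ofReal (125 * Cμ * Cj ^ ((N : ℝ) + σ) * Bd *
        (176 * (1 / T) / δ * ((δ / 4) ^ (-(σ + κ)) * 2 ^ N))) *
        ∫⁻ z in ball (0 : Euc N) 1, ENNReal.ofReal (‖z‖ ^ (κ - N)) := by
  have hT1 : 0 < 1 / T := by positivity
  have hδ0 : 0 < δ := by linarith
  have hN1 : (1 : ℝ) ≤ N := by exact_mod_cast hN
  have hdc := hlip.continuous
  set S : Set (Euc N) := {w | ‖w‖ < ρ ∧ δ / 4 ≤ ‖w‖ ∧ 0 ≤ d (x + w) ∧ d (x + w) ≤ 5 * (1 / T)}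
    with hSdef
  have hSm : MeasurableSet S := by
    have hm1 : Measurable fun w => d (x + w) :=
      (by fun_prop : Continuous fun w => d (x + w)).measurable
    have hm2 : Measurable fun w : Euc N => ‖w‖ := measurable_norm
    exact (measurableSet_lt hm2 measurable_const).inter
      ((measurableSet_le measurable_const hm2).inter
      ((measurableSet_le measurable_const hm1).inter (measurableSet_le hm1 measurable_const)))
  have hslab := slab hN σ κ hσ hκ hκ1 e he δ (1 / T) ρ hT1 hδ hρ (fun w => d (x + w)) hq S hSm
    (fun w hw => ⟨by simpa using hw.1, hw.2.1, hw.2.2.1, hw.2.2.2⟩)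
  have hcov := cov_le J hbij hC Aj Bd hA hBd S hSm (fun w => ENNReal.ofReal (‖w‖ ^ (-((N : ℝ) + σ))))
  have hJm : MeasurableSet (J ⁻¹' S) := hJc.measurable hSm
  set c := 125 * Cμ * Cj ^ ((N : ℝ) + σ) with hc
  have hc0 : 0 ≤ c := by positivity
  have hfirst : ∫⁻ z in Z, ENNReal.ofReal ((prof (T * D (x + J z)) - prof (T * D x)) * gx z) ≤
      ENNReal.ofReal c * ∫⁻ z in J ⁻¹' S, ENNReal.ofReal (‖J z‖ ^ (-((N : ℝ) + σ))) := by
    rw [← lintegral_const_mul' _ _ ENNReal.ofReal_ne_top, ← lintegral_indicator hZm,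
      ← lintegral_indicator hJm]
    refine lintegral_mono fun z => ?_
    by_cases hz : z ∈ Z
    swap
    · simp [hz]
    rw [indicator_of_mem hz]
    have hxD : prof (T * D x) = 0 := by
      refine prof_zero ?_
      have h1 := (abs_le.1 (hDd x)).1
      have h2 : 127 * (1 / T) ≤ D x := by linarith
      have h3 := mul_le_mul_of_nonneg_left h2 hT.le
      have h4 : T * (127 * (1 / T)) = 127 := by field_simp
      linarith
    rw [hxD, sub_zero]
    by_cases hcase : d (x + J z) ≤ 5 * (1 / T)
    · have hle : δ / 4 ≤ ‖J z‖ := by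
        have := hlip.dist_le_mul x (x + J z)
        rw [Real.dist_eq, dist_eq_norm] at this
        simp only [sub_add_cancel_left, norm_neg] at this
        have h2 := le_abs_self (d x - d (x + J z))
        have h3 : ((2 : ℝ≥0) : ℝ) = 2 := rfl
        rw [h3] at this
        linarith
      have hzS : z ∈ J ⁻¹' S := ⟨hZρ z hz, hle, hZd z hz, hcase⟩
      rw [indicator_of_mem hzS, ← ENNReal.ofReal_mul hc0]
      refine ENNReal.ofReal_le_ofReal ?_
      have hJz : 0 < ‖J z‖ := by linarith
      have hz0 : 0 < ‖z‖ := by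
        by_contra hcon
        have : ‖z‖ = 0 := le_antisymm (not_lt.1 hcon) (norm_nonneg _)
        have h5 := hJ z
        rw [this] at h5; linarith
      have hp : prof (T * D (x + J z)) ≤ 125 := by
        refine prof_le ?_
        have h1 := (abs_le.1 (hDd (x + J z))).1
        have h2 : -(1 / T) ≤ D (x + J z) := by linarith [hZd z hz]
        have h3 := mul_le_mul_of_nonneg_left h2 hT.le
        have h4 : T * (-(1 / T)) = -1 := by field_simp
        linarith
      have hpow : ‖z‖ ^ (-((N : ℝ) + σ)) ≤ Cj ^ ((N : ℝ) + σ) * ‖J z‖ ^ (-((N : ℝ) + σ)) := by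
        calc ‖z‖ ^ (-((N : ℝ) + σ)) ≤ (Cj⁻¹ * ‖J z‖) ^ (-((N : ℝ) + σ)) := by
              refine Real.rpow_le_rpow_of_nonpos (by positivity) ?_ (by linarith)
              rw [inv_mul_le_iff₀ hCj]; exact hJ z
          _ = _ := by
              rw [Real.mul_rpow (by positivity) hJz.le, Real.inv_rpow hCj.le,
                ← Real.rpow_neg hCj.le, neg_neg]
      calc prof (T * D (x + J z)) * gx z
          ≤ 125 * (Cμ * (Cj ^ ((N : ℝ) + σ) * ‖J z‖ ^ (-((N : ℝ) + σ)))) := by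
            refine mul_le_mul hp ((hg z).trans ?_) (hg0 z) (by norm_num)
            gcongr
        _ = _ := by rw [hc]; ring
    · have : prof (T * D (x + J z)) = 0 := by
        refine prof_zero ?_
        have h1 := (abs_le.1 (hDd (x + J z))).1
        have h2 : 4 * (1 / T) ≤ D (x + J z) := by linarith
        have h3 := mul_le_mul_of_nonneg_left h2 hT.le
        have h4 : T * (4 * (1 / T)) = 4 := by field_simp
        linarith
      rw [this]; simp
  refine hfirst.trans ?_
  calc _ ≤ ENNReal.ofReal c * (ENNReal.ofReal Bd * (ENNReal.ofReal
        (176 * (1 / T) / δ * ((δ / 4) ^ (-(σ + κ)) * 2 ^ N)) * _)) :=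
        mul_le_mul_right (hcov.trans (mul_le_mul_right hslab _)) _
    _ = _ := by
      rw [ENNReal.ofReal_mul (by positivity : 0 ≤ c * Bd), ENNReal.ofReal_mul hc0]
      ring

/-- combined bound -/
lemma num_bound (σ κ γ Cμ Cj T δ Bd : ℝ) (hσ : 0 < σ) (hκ : 0 < κ) (hγ : 0 < γ)
    (hsum : σ + κ + γ ≤ 1) (hCμ : 0 < Cμ) (hCj : 0 < Cj) (hT : 0 < T) (hδ : 0 < δ) (hBd : 0 ≤ Bd) :
    (T * δ ≤ 128 → 150 * (2 * T * Cj) ^ (σ + κ) * Cμ ≤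
      (150 * (2 * Cj) ^ (σ + κ) * Cμ * 128) * (T ^ (-γ) * δ ^ (-(σ + κ + γ)))) ∧
    (128 ≤ T * δ → 125 * Cμ * Cj ^ ((N : ℝ) + σ) * Bd *
        (176 * (1 / T) / δ * ((δ / 4) ^ (-(σ + κ)) * 2 ^ N)) ≤
      (125 * Cμ * Cj ^ ((N : ℝ) + σ) * Bd * 176 * 4 * 2 ^ N) *
        (T ^ (-γ) * δ ^ (-(σ + κ + γ)))) := by
  constructor
  · intro h
    have h1 : T ^ (σ + κ + γ) ≤ 128 * δ ^ (-(σ + κ + γ)) := by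
      calc T ^ (σ + κ + γ) ≤ (128 / δ) ^ (σ + κ + γ) := by
            refine Real.rpow_le_rpow hT.le ?_ (by linarith)
            rw [le_div_iff₀ hδ]; exact h
        _ = 128 ^ (σ + κ + γ) * δ ^ (-(σ + κ + γ)) := by
            rw [Real.div_rpow (by norm_num) hδ.le, Real.rpow_neg hδ.le]; rfl
        _ ≤ _ := by
            gcongr
            calc (128 : ℝ) ^ (σ + κ + γ) ≤ 128 ^ (1 : ℝ) :=
                  Real.rpow_le_rpow_of_exponent_le (by norm_num) hsum
              _ = 128 := Real.rpow_one _
    have h2 : T ^ (σ + κ) = T ^ (-γ) * T ^ (σ + κ + γ) := by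
      rw [← Real.rpow_add hT]; congr 1; ring
    rw [show 2 * T * Cj = (2 * Cj) * T by ring, Real.mul_rpow (by positivity) hT.le, h2]
    calc _ ≤ 150 * ((2 * Cj) ^ (σ + κ) * (T ^ (-γ) * (128 * δ ^ (-(σ + κ + γ))))) * Cμ := by gcongr
      _ = _ := by ring
  · intro h
    have h1 : 1 / T = T ^ (-γ) * T ^ (-(1 - γ)) := by
      rw [← Real.rpow_add hT, show -γ + -(1 - γ) = -1 by ring, Real.rpow_neg_one, one_div]
    have h2 : T ^ (-(1 - γ)) ≤ δ ^ (1 - γ) := by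
      calc T ^ (-(1 - γ)) ≤ (1 / δ) ^ (-(1 - γ)) := by
            refine Real.rpow_le_rpow_of_nonpos (by positivity) ?_ (by linarith)
            rw [div_le_iff₀ hδ]; linarith
        _ = _ := by
            rw [one_div, Real.inv_rpow hδ.le, ← Real.rpow_neg hδ.le, neg_neg]
    have h3 : (δ / 4) ^ (-(σ + κ)) ≤ 4 * δ ^ (-(σ + κ)) := by
      rw [div_eq_mul_inv, Real.mul_rpow hδ.le (by norm_num), Real.inv_rpow (by norm_num),
        ← Real.rpow_neg (by norm_num), neg_neg, mul_comm]
      gcongr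
      calc (4 : ℝ) ^ (σ + κ) ≤ 4 ^ (1 : ℝ) :=
                  Real.rpow_le_rpow_of_exponent_le (by norm_num) (by linarith)
        _ = 4 := Real.rpow_one _
    have h4 : δ ^ (1 - γ) / δ * δ ^ (-(σ + κ)) = δ ^ (-(σ + κ + γ)) := by
      rw [div_eq_mul_inv, ← Real.rpow_neg_one δ, ← Real.rpow_add hδ, ← Real.rpow_add hδ]
      congr 1; ring
    rw [h1]
    calc _ ≤ 125 * Cμ * Cj ^ ((N : ℝ) + σ) * Bd *
        (176 * (T ^ (-γ) * δ ^ (1 - γ)) / δ * ((4 * δ ^ (-(σ + κ))) * 2 ^ N)) := by gcongr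
      _ = (125 * Cμ * Cj ^ ((N : ℝ) + σ) * Bd * 176 * 4 * 2 ^ N) *
        (T ^ (-γ) * (δ ^ (1 - γ) / δ * δ ^ (-(σ + κ)))) := by ring
      _ = _ := by rw [h4]


/-- The blow-up function, as a locally finite series. -/
def Uf (D : ℕ → Euc N → ℝ) (y : Euc N) : ℝ := ∑' k, prof (2 ^ k * D k y)

lemma two_pow_D (D : ℕ → Euc N → ℝ) (d : Euc N → ℝ)
    (hDd : ∀ k y, |D k y - d y| ≤ 1 / 2 ^ k) (k : ℕ) (y : Euc N) :
    2 ^ k * d y - 1 ≤ 2 ^ k * D k y ∧ 2 ^ k * D k y ≤ 2 ^ k * d y + 1 := by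
  have h := abs_le.1 (hDd k y)
  have hp : (0 : ℝ) < 2 ^ k := by positivity
  have h1 : (2 : ℝ) ^ k * (1 / 2 ^ k) = 1 := by field_simp
  constructor <;> nlinarith [h.1, h.2]

lemma Uf_locally_finite (D : ℕ → Euc N → ℝ) (d : Euc N → ℝ) (hd : Continuous d)
    (hDd : ∀ k y, |D k y - d y| ≤ 1 / 2 ^ k) (x : Euc N) (hx : 0 < d x) :
    ∃ K : ℕ, ∀ᶠ y in 𝓝 x, ∀ k, K ≤ k → prof (2 ^ k * D k y) = 0 := by
  obtain ⟨K, hK⟩ := pow_unbounded_of_one_lt (10 / d x) (one_lt_two)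
  refine ⟨K, ?_⟩
  filter_upwards [hd.continuousAt.eventually (lt_mem_nhds (half_lt_self hx))] with y hy k hk
  refine prof_zero ?_
  have h1 := (two_pow_D D d hDd k y).1
  have h2 : (2 : ℝ) ^ K ≤ 2 ^ k := pow_le_pow_right₀ (by norm_num) hk
  rw [div_lt_iff₀ hx] at hK
  have h3 : (2 : ℝ) ^ K * d x ≤ 2 ^ k * d x := by gcongr
  have h4 : (2 : ℝ) ^ k * (d x / 2) ≤ 2 ^ k * d y := by gcongr
  linarith

lemma Uf_eq_sum (D : ℕ → Euc N → ℝ) (y : Euc N) (K : ℕ)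
    (h : ∀ k, K ≤ k → prof (2 ^ k * D k y) = 0) :
    Uf D y = ∑ k ∈ Finset.range K, prof (2 ^ k * D k y) := by
  unfold Uf
  exact tsum_eq_sum (fun k hk => h k (by simpa using hk))

lemma Uf_contDiffAt (D : ℕ → Euc N → ℝ) (d : Euc N → ℝ) (hd : Continuous d)
    (hDd : ∀ k y, |D k y - d y| ≤ 1 / 2 ^ k) (hD : ∀ k, ContDiff ℝ 2 (D k))
    (x : Euc N) (hx : 0 < d x) : ContDiffAt ℝ 2 (Uf D) x := by
  obtain ⟨K, hK⟩ := Uf_locally_finite D d hd hDd x hx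
  have : ContDiffAt ℝ 2 (fun y => ∑ k ∈ Finset.range K, prof (2 ^ k * D k y)) x := by
    refine ContDiff.contDiffAt ?_
    refine ContDiff.sum fun k _ => ?_
    exact prof_contDiff.comp (contDiff_const.mul (hD k))
  refine this.congr_of_eventuallyEq ?_
  filter_upwards [hK] with y hy
  exact Uf_eq_sum D y K hy

lemma Uf_summable (D : ℕ → Euc N → ℝ) (d : Euc N → ℝ) (hd : Continuous d)
    (hDd : ∀ k y, |D k y - d y| ≤ 1 / 2 ^ k) (x : Euc N) (hx : 0 < d x) :
    Summable fun k => prof (2 ^ k * D k x) := by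
  obtain ⟨K, hK⟩ := Uf_locally_finite D d hd hDd x hx
  refine summable_of_ne_finset_zero (s := Finset.range K) (fun k hk => ?_)
  exact hK.self_of_nhds k (by simpa using hk)

lemma Uf_nonneg (D : ℕ → Euc N → ℝ) (y : Euc N) : 0 ≤ Uf D y :=
  tsum_nonneg fun _ => prof_nonneg _

lemma Uf_boundary (D : ℕ → Euc N → ℝ) (d : Euc N → ℝ)
    (hDd : ∀ k y, |D k y - d y| ≤ 1 / 2 ^ k) (y : Euc N) (hy : d y = 0) : Uf D y = 0 := by
  unfold Uf
  refine tsum_eq_zero_of_not_summable fun hs => ?_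
  have h := hs.tendsto_atTop_zero
  have h2 : (1 : ℝ) ≤ 0 := by
    refine ge_of_tendsto' h fun k => prof_ge ?_
    have := (two_pow_D D d hDd k y).2
    rw [hy] at this; linarith
  linarith

lemma exists_scale (δ : ℝ) (h0 : 0 < δ) (h1 : δ ≤ 1) : ∃ n : ℕ, 1 < 2 ^ n * δ ∧ 2 ^ n * δ ≤ 2 := by
  obtain ⟨n, hn1, hn2⟩ := exists_nat_pow_near (x := 1 / δ) (y := (2 : ℝ))
    (by rw [le_div_iff₀ h0]; linarith) one_lt_two
  refine ⟨n + 1, ?_, ?_⟩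
  · rwa [div_lt_iff₀ h0] at hn2
  · rw [le_div_iff₀ h0] at hn1
    rw [pow_succ]; linarith

lemma Uf_lower (D : ℕ → Euc N → ℝ) (d : Euc N → ℝ) (hd : Continuous d)
    (hDd : ∀ k y, |D k y - d y| ≤ 1 / 2 ^ k) (x : Euc N) (hx : 0 < d x) (hx1 : d x ≤ 1) :
    1 - Real.log (d x) ≤ Uf D x := by
  obtain ⟨n, hn1, hn2⟩ := exists_scale (d x) hx hx1
  have hs := Uf_summable D d hd hDd x hx
  have h1 : ∑ k ∈ Finset.range (n + 1), (1 : ℝ) ≤ Uf D x := by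
    refine le_trans (Finset.sum_le_sum fun k hk => ?_)
      (hs.sum_le_tsum (Finset.range (n + 1)) fun _ _ => prof_nonneg _)
    refine prof_ge ?_
    have h2 := (two_pow_D D d hDd k x).2
    have h3 : (2 : ℝ) ^ k ≤ 2 ^ n :=
      pow_le_pow_right₀ (by norm_num) (by have := Finset.mem_range.1 hk; omega)
    have h4 : (2 : ℝ) ^ k * d x ≤ 2 ^ n * d x := by gcongr
    linarith
  simp at h1
  have h5 : 0 < Real.log (2 ^ n * d x) := Real.log_pos hn1
  rw [Real.log_mul (by positivity) hx.ne', Real.log_pow] at h5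
  have h6 : (n : ℝ) * Real.log 2 ≤ n * 1 := by
    gcongr
    have := Real.log_two_lt_d9; linarith
  linarith

lemma Uf_pointwise (D : ℕ → Euc N → ℝ) (d : Euc N → ℝ) (hd : Continuous d)
    (hDd : ∀ k y, |D k y - d y| ≤ 1 / 2 ^ k) (x y : Euc N) (hx : 0 < d x) (hy : 0 ≤ d y)
    (c : ℝ) (hc : 0 ≤ c) :
    ENNReal.ofReal ((Uf D y - Uf D x) * c) ≤
      ∑' k, ENNReal.ofReal ((prof (2 ^ k * D k y) - prof (2 ^ k * D k x)) * c) := by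
  rcases hy.eq_or_lt with h | h
  · rw [Uf_boundary D d hDd y h.symm]
    have := Uf_nonneg D x
    rw [ENNReal.ofReal_of_nonpos]
    · exact bot_le
    · nlinarith
  · obtain ⟨K, hK⟩ := Uf_locally_finite D d hd hDd x hx
    obtain ⟨K', hK'⟩ := Uf_locally_finite D d hd hDd y h
    rw [Uf_eq_sum D x (max K K') (fun k hk => hK.self_of_nhds k (le_trans (le_max_left _ _) hk)),
      Uf_eq_sum D y (max K K') (fun k hk => hK'.self_of_nhds k (le_trans (le_max_right _ _) hk)),
      ← Finset.sum_sub_distrib, Finset.sum_mul]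
    refine le_trans ?_ (ENNReal.sum_le_tsum (Finset.range (max K K')))
    exact Finset.le_sum_of_subadditive ENNReal.ofReal ENNReal.ofReal_zero.le
      (fun _ _ => ENNReal.ofReal_add_le) _ _

lemma Uf_decr (D : ℕ → Euc N → ℝ) (d : Euc N → ℝ) (hd : Continuous d)
    (hDd : ∀ k y, |D k y - d y| ≤ 1 / 2 ^ k) (hD : ∀ k, ContDiff ℝ 2 (D k))
    (x v : Euc N) (hx : 0 < d x) (hx1 : d x ≤ 1) (c : ℝ) (hc : 0 < c)
    (hv : ∀ᶠ t in 𝓝[>] (0 : ℝ), ∀ k, D k x + c * t ≤ D k (x + t • v)) :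
    c / d x ≤ - ⟪v, gradient (Uf D) x⟫ := by
  obtain ⟨n, hn1, hn2⟩ := exists_scale (d x) hx hx1
  have hdiff : DifferentiableAt ℝ (Uf D) x :=
    (Uf_contDiffAt D d hd hDd hD x hx).differentiableAt (by norm_num)
  have hg : ⟪v, gradient (Uf D) x⟫ = fderiv ℝ (Uf D) x v := by
    rw [real_inner_comm, gradient, InnerProductSpace.toDual_symm_apply]
  have hslope := (hdiff.hasFDerivAt.hasLineDerivAt v).tendsto_slope_zero_right
  have hle : fderiv ℝ (Uf D) x v ≤ -(c * 2 ^ n) := by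
    refine le_of_tendsto hslope ?_
    obtain ⟨K, hK⟩ := Uf_locally_finite D d hd hDd x hx
    have hcont : Tendsto (fun t : ℝ => x + t • v) (𝓝[>] 0) (𝓝 x) := by
      have : Continuous fun t : ℝ => x + t • v := by fun_prop
      have h := this.tendsto 0
      simp only [zero_smul, add_zero] at h
      exact h.mono_left nhdsWithin_le_nhds
    have hsmall : ∀ᶠ t in 𝓝[>] (0 : ℝ), t < 1 / (2 ^ n * c) :=
      nhdsWithin_le_nhds (gt_mem_nhds (by positivity))
    filter_upwards [hv, hcont.eventually hK, hsmall, self_mem_nhdsWithin] with t h1 h2 h3 h4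
    have ht : 0 < t := h4
    set M := max K (n + 1) with hM
    rw [smul_eq_mul, inv_mul_le_iff₀ ht,
      Uf_eq_sum D x M (fun k hk => hK.self_of_nhds k (le_trans (le_max_left _ _) hk)),
      Uf_eq_sum D (x + t • v) M (fun k hk => h2 k (le_trans (le_max_left _ _) hk)),
      ← Finset.sum_sub_distrib]
    have hmem : n ∈ Finset.range M := Finset.mem_range.2 (lt_of_lt_of_le (Nat.lt_succ_self n) (le_max_right _ _))
    rw [← Finset.add_sum_erase _ _ hmem]
    have hrest : ∑ k ∈ (Finset.range M).erase n,
        (prof (2 ^ k * D k (x + t • v)) - prof (2 ^ k * D k x)) ≤ 0 := by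
      refine Finset.sum_nonpos fun k _ => ?_
      have : prof (2 ^ k * D k (x + t • v)) ≤ prof (2 ^ k * D k x) := by
        refine prof_anti ?_
        have := h1 k
        have h5 : 0 < c * t := by positivity
        gcongr
        linarith
      linarith
    have hmain : prof (2 ^ n * D n (x + t • v)) ≤ prof (2 ^ n * D n x) - 2 ^ n * (c * t) := by
      refine le_trans (prof_anti (?_ : 2 ^ n * D n x + 2 ^ n * (c * t) ≤ _)) (prof_decr ?_ ?_ ?_)
      · rw [← mul_add]; gcongr; exact h1 n
      · have := (two_pow_D D d hDd n x).2; linarith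
      · positivity
      · rw [lt_div_iff₀ (by positivity)] at h3; linarith
    linarith
  rw [hg, div_le_iff₀ hx]
  have : c * 1 ≤ c * (2 ^ n * d x) := by gcongr
  nlinarith

/-- The modulus. -/
def om (s : ℝ) : ℝ := if s ≤ 0 then 0 else (1 - Real.log (min s 1))⁻¹

lemma om_cont : Continuous om := by
  have hpos : ∀ s : ℝ, 0 < s → 0 < 1 - Real.log (min s 1) := by
    intro s hs
    have : Real.log (min s 1) ≤ 0 :=
      Real.log_nonpos (le_min hs.le zero_le_one) (min_le_right _ _)
    linarith
  rw [continuous_iff_continuousAt]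
  intro s
  rcases lt_trichotomy s 0 with h | h | h
  · have : om =ᶠ[𝓝 s] fun _ => 0 := by
      filter_upwards [Iio_mem_nhds h] with y hy
      simp [om, le_of_lt (show y < 0 from hy)]
    exact continuousAt_const.congr this.symm
  · subst h
    rw [continuousAt_iff_continuous_left'_right']
    have h0 : om 0 = 0 := by simp [om]
    constructor
    · refine tendsto_nhds_of_eventually_eq ?_ |>.trans (by rw [h0])
      filter_upwards [self_mem_nhdsWithin] with y hy
      simp [om, le_of_lt (show y < 0 from hy)]
    · unfold ContinuousWithinAt
      rw [h0]
      have h1 : Tendsto (fun s : ℝ => (1 - Real.log s)⁻¹) (𝓝[>] 0) (𝓝 0) := by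
        refine Tendsto.inv_tendsto_atTop ?_
        exact tendsto_atTop_add_const_left _ 1 (tendsto_neg_atBot_atTop.comp Real.tendsto_log_nhdsGT_zero)
      refine h1.congr' ?_
      filter_upwards [Ioo_mem_nhdsGT one_pos] with y hy
      simp [om, not_le.2 hy.1, min_eq_left hy.2.le]
  · have : om =ᶠ[𝓝 s] fun s => (1 - Real.log (min s 1))⁻¹ := by
      filter_upwards [Ioi_mem_nhds h] with y hy
      simp [om, not_le.2 (show 0 < y from hy)]
    refine ContinuousAt.congr ?_ this.symm
    refine ContinuousAt.inv₀ ?_ (hpos s h).ne'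
    refine continuousAt_const.sub ?_
    refine ContinuousAt.log (by fun_prop) ?_
    exact (lt_min h one_pos).ne'

lemma om_nonneg (s : ℝ) : 0 ≤ om s := by
  unfold om
  split_ifs with h
  · exact le_rfl
  · have : Real.log (min s 1) ≤ 0 :=
      Real.log_nonpos (le_min (not_le.1 h).le zero_le_one) (min_le_right _ _)
    exact inv_nonneg.2 (by linarith)

lemma om_strict : StrictMonoOn om (Icc 0 1) := by
  intro a ha b hb hab
  have hb0 : 0 < b := lt_of_le_of_lt ha.1 hab
  have hlb : Real.log b ≤ 0 := Real.log_nonpos hb0.le hb.2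
  have eb : om b = (1 - Real.log b)⁻¹ := by simp [om, not_le.2 hb0, min_eq_left hb.2]
  rcases ha.1.eq_or_lt with h | h
  · rw [← h, eb]; simp only [om, le_refl, if_true]
    exact inv_pos.2 (by linarith)
  · have ea : om a = (1 - Real.log a)⁻¹ := by simp [om, not_le.2 h, min_eq_left ha.2]
    rw [ea, eb]
    have := Real.log_lt_log h hab
    exact inv_strictAnti₀ (by linarith) (by linarith)

/-- The kernel mass used in the estimates. -/
def Kr (N : ℕ) (κ : ℝ) : ℝ :=
  (∫⁻ z in ball (0 : Euc N) 1, ENNReal.ofReal (‖z‖ ^ (κ - N))).toReal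

/-- The total constant in the estimate of the nonlocal term. -/
def Ct (N : ℕ) (σ κ γ Cμ Cj Bd : ℝ) : ℝ :=
  (150 * (2 * Cj) ^ (σ + κ) * Cμ * 128 +
    125 * Cμ * Cj ^ ((N : ℝ) + σ) * Bd * 176 * 4 * 2 ^ N) * Kr N κ *
    ∑' k : ℕ, ((2 : ℝ) ^ k) ^ (-γ)

lemma summable_geo (γ : ℝ) (hγ : 0 < γ) : Summable fun k : ℕ => ((2 : ℝ) ^ k) ^ (-γ) := by
  have h : (fun k : ℕ => ((2 : ℝ) ^ k) ^ (-γ)) = fun k : ℕ => ((2 : ℝ) ^ (-γ)) ^ k := by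
    funext k
    rw [← Real.rpow_natCast, ← Real.rpow_natCast, ← Real.rpow_mul (by norm_num),
      ← Real.rpow_mul (by norm_num), mul_comm]
  rw [h]
  refine summable_geometric_of_lt_one (by positivity) ?_
  exact Real.rpow_lt_one_of_one_lt_of_neg (by norm_num) (by linarith)

lemma Ct_nonneg (σ κ γ Cμ Cj Bd : ℝ) (hCμ : 0 < Cμ) (hCj : 0 < Cj) (hBd : 0 ≤ Bd) :
    0 ≤ Ct N σ κ γ Cμ Cj Bd := by
  unfold Ct
  have h1 : 0 ≤ ∑' k : ℕ, ((2 : ℝ) ^ k) ^ (-γ) := tsum_nonneg fun k => by positivity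
  have h2 : 0 ≤ Kr N κ := ENNReal.toReal_nonneg
  positivity

lemma U_lintegral (hN : 0 < N) (σ κ γ Cμ Cj δ ρ Aj Bd : ℝ) (hσ : 0 < σ) (hκ : 0 < κ)
    (hγ : 0 < γ) (hsum : σ + κ + γ ≤ 1)
    (hCμ : 0 < Cμ) (hCj : 0 < Cj)
    (x e : Euc N) (he : ‖e‖ = 1)
    (J : Euc N → Euc N) (gx : Euc N → ℝ) (D : ℕ → Euc N → ℝ) (d : Euc N → ℝ) (Z : Set (Euc N))
    (hZm : MeasurableSet Z) (hZ1 : ∀ z ∈ Z, ‖z‖ < 1) (hZρ : ∀ z ∈ Z, ‖J z‖ < ρ)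
    (hZd : ∀ z ∈ Z, 0 ≤ d (x + J z)) (hdx : d x = δ) (hδ : 0 < δ)
    (hρ : ρ + δ / 8 ≤ 1)
    (hJ : ∀ z, ‖J z‖ ≤ Cj * ‖z‖) (hgm : Measurable gx) (hg0 : ∀ z, 0 ≤ gx z)
    (hg : ∀ z, gx z ≤ Cμ * ‖z‖ ^ (-((N : ℝ) + σ)))
    (hD : ∀ k, ContDiff ℝ 2 (D k))
    (hDd : ∀ k y, |D k y - d y| ≤ 1 / 2 ^ k)
    (hDl : ∀ k, ∀ z ∈ Z, |D k (x + J z) - D k x| ≤ 2 * ‖J z‖)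
    (hlip : LipschitzWith 2 d)
    (hq : ∀ y ∈ ball (0 : Euc N) ρ, ∀ y' ∈ ball (0 : Euc N) ρ, ∀ s : ℝ, 0 ≤ s → y = y' + s • e →
      d (x + y') + s / 2 ≤ d (x + y))
    (hbij : Bijective J) (hJc : Continuous J)
    (hC : ContDiff ℝ 1 (invFun J)) (hA : ∀ z, ‖fderiv ℝ (invFun J) z‖ ≤ Aj)
    (hBd0 : 0 ≤ Bd) (hBd : ∀ L : Euc N →L[ℝ] Euc N, ‖L‖ ≤ Aj → |L.det| ≤ Bd) :
    ∫⁻ z in Z, ENNReal.ofReal ((Uf D (x + J z) - Uf D x) * gx z) ≤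
      ENNReal.ofReal (Ct N σ κ γ Cμ Cj Bd * δ ^ (-(σ + κ + γ))) := by
  have hK := kernel_finite hN κ hκ
  set CA := 150 * (2 * Cj) ^ (σ + κ) * Cμ * 128 with hCA
  set CB := 125 * Cμ * Cj ^ ((N : ℝ) + σ) * Bd * 176 * 4 * 2 ^ N with hCB
  have hCA0 : 0 ≤ CA := by positivity
  have hCB0 : 0 ≤ CB := by positivity
  have hKr : 0 ≤ Kr N κ := ENNReal.toReal_nonneg
  have hstep : ∀ k : ℕ,
      ∫⁻ z in Z, ENNReal.ofReal ((prof (2 ^ k * D k (x + J z)) - prof (2 ^ k * D k x)) * gx z) ≤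
      ENNReal.ofReal ((CA + CB) * Kr N κ * δ ^ (-(σ + κ + γ)) * ((2 : ℝ) ^ k) ^ (-γ)) := by
    intro k
    have hT : (0 : ℝ) < 2 ^ k := by positivity
    have hnum := num_bound (N := N) σ κ γ Cμ Cj (2 ^ k) δ Bd hσ hκ hγ hsum hCμ hCj hT hδ hBd0
    have hpos : 0 ≤ ((2 : ℝ) ^ k) ^ (-γ) * δ ^ (-(σ + κ + γ)) := by positivity
    have hfin : ∀ c : ℝ, c ≤ (CA + CB) * (((2 : ℝ) ^ k) ^ (-γ) * δ ^ (-(σ + κ + γ))) →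
        ENNReal.ofReal c * ∫⁻ z in ball (0 : Euc N) 1, ENNReal.ofReal (‖z‖ ^ (κ - N)) ≤
        ENNReal.ofReal ((CA + CB) * Kr N κ * δ ^ (-(σ + κ + γ)) * ((2 : ℝ) ^ k) ^ (-γ)) := by
      intro c hc
      have e1 : (CA + CB) * Kr N κ * δ ^ (-(σ + κ + γ)) * ((2 : ℝ) ^ k) ^ (-γ) =
        ((CA + CB) * (((2 : ℝ) ^ k) ^ (-γ) * δ ^ (-(σ + κ + γ)))) * Kr N κ := by ring
      rw [e1, ENNReal.ofReal_mul (by positivity), Kr, ENNReal.ofReal_toReal hK.ne]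
      gcongr
    rcases le_total (2 ^ k * δ) 128 with h | h
    · refine (termA hN σ κ Cμ Cj (2 ^ k) hσ hκ (by linarith) hCμ hCj hT x J gx (D k) d Z hZm hZ1
        hZd (by rw [hdx]; exact hδ.le) hJ hg0 hg (hDd k) (hDl k)).trans (hfin _ ?_)
      refine (hnum.1 h).trans ?_
      gcongr
      linarith
    · refine (termB hN σ κ Cμ Cj (2 ^ k) δ ρ Aj Bd hσ hκ (by linarith) hCμ hCj hT x e he J gx (D k)
        d Z hZm hZρ hZd hdx ?_ hρ hJ hg0 hg (hDd k) hlip hq hbij hJc hC hA hBd0 hBd).trans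
        (hfin _ ?_)
      · rw [mul_one_div, div_le_iff₀ hT]; linarith
      · refine (hnum.2 h).trans ?_
        gcongr
        linarith
  have hsm := (summable_geo γ hγ).mul_left ((CA + CB) * Kr N κ * δ ^ (-(σ + κ + γ)))
  calc ∫⁻ z in Z, ENNReal.ofReal ((Uf D (x + J z) - Uf D x) * gx z)
      ≤ ∫⁻ z in Z, ∑' k : ℕ, ENNReal.ofReal
          ((prof (2 ^ k * D k (x + J z)) - prof (2 ^ k * D k x)) * gx z) := by
        refine setLIntegral_mono' hZm fun z hz => ?_
        exact Uf_pointwise D d hlip.continuous hDd x (x + J z) (by rw [hdx]; exact hδ) (hZd z hz)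
          _ (hg0 z)
    _ = ∑' k : ℕ, ∫⁻ z in Z, ENNReal.ofReal
          ((prof (2 ^ k * D k (x + J z)) - prof (2 ^ k * D k x)) * gx z) := by
        refine lintegral_tsum fun k => ?_
        have h1 : Continuous fun z => prof (2 ^ k * D k (x + J z)) - prof (2 ^ k * D k x) := by
          have := prof_contDiff.continuous
          have := (hD k).continuous
          fun_prop
        exact (h1.measurable.mul hgm).ennreal_ofReal.aemeasurable
    _ ≤ ∑' k : ℕ, ENNReal.ofReal
          ((CA + CB) * Kr N κ * δ ^ (-(σ + κ + γ)) * ((2 : ℝ) ^ k) ^ (-γ)) :=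
        ENNReal.tsum_le_tsum hstep
    _ = ENNReal.ofReal (Ct N σ κ γ Cμ Cj Bd * δ ^ (-(σ + κ + γ))) := by
        rw [← ENNReal.ofReal_tsum_of_nonneg (fun k => by positivity) hsm, tsum_mul_left]
        congr 1
        unfold Ct
        ring

lemma sdist_lip (Ω : Set (Euc N)) : LipschitzWith 2 (sdist Ω) := by
  have h := (lipschitz_infDist_pt (α := Euc N) Ωᶜ).sub (lipschitz_infDist_pt Ω)
  have e : (1 : ℝ≥0) + 1 = 2 := by norm_num
  rw [e] at h
  exact h

lemma sdist_pos (Ω : Set (Euc N)) (hΩ : IsOpen Ω) (hne : Ωᶜ.Nonempty) (x : Euc N) (hx : x ∈ Ω) :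
    0 < sdist Ω x := by
  have h1 : infDist x Ω = 0 := infDist_zero_of_mem hx
  have h2 : 0 < infDist x Ωᶜ :=
    (hΩ.isClosed_compl.notMem_iff_infDist_pos hne).1 (by simpa using hx)
  unfold sdist; linarith

lemma sdist_nonneg (Ω : Set (Euc N)) (x : Euc N) (hx : x ∈ closure Ω) : 0 ≤ sdist Ω x := by
  have h1 : infDist x Ω = 0 := by
    rw [← infDist_closure]; exact infDist_zero_of_mem hx
  unfold sdist
  have := infDist_nonneg (x := x) (s := Ωᶜ)
  linarith

lemma sdist_frontier (Ω : Set (Euc N)) (x : Euc N) (hx : x ∈ frontier Ω) : sdist Ω x = 0 := by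
  rw [frontier_eq_closure_inter_closure] at hx
  have h1 : infDist x Ω = 0 := by
    rw [← infDist_closure]; exact infDist_zero_of_mem hx.1
  have h2 : infDist x Ωᶜ = 0 := by
    rw [← infDist_closure]; exact infDist_zero_of_mem hx.2
  unfold sdist; linarith

lemma sdist_strict (hN : 0 < N) (Ω : Set (Euc N)) (hΩ : IsW2Domain hN Ω)
    (n : Euc N → Euc N) (hn : IsExteriorNormal Ω n) (x₀ : Euc N) (hx₀ : x₀ ∈ frontier Ω)
    (ε : ℝ) (hε : 0 < ε) : ∃ R > 0, ∀ y ∈ ball x₀ R, ∀ y' ∈ ball x₀ R,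
      |sdist Ω y' - sdist Ω y - ⟪-(n x₀), y' - y⟫| ≤ ε * ‖y' - y‖ := by
  obtain ⟨r, ψ, ψinv, hr, hψ, -, -, -, -, hlast⟩ := hΩ.2 x₀ hx₀
  have hc : ContDiffAt ℝ 1 (sdist Ω) x₀ := by
    have h1 : ContDiffAt ℝ 1 ψ x₀ := hψ.contDiffAt (ball_mem_nhds _ hr)
    have h2 : ContDiffAt ℝ 1 (fun x => ψ x ⟨N - 1, Nat.sub_lt hN Nat.one_pos⟩) x₀ := by
      fun_prop
    refine h2.congr_of_eventuallyEq ?_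
    filter_upwards [ball_mem_nhds x₀ hr] with y hy
    exact (hlast y hy).symm
  have hs := hc.hasStrictFDerivAt' (hn x₀ hx₀).2.hasFDerivAt (by norm_num)
  have h := hs.isLittleO.def hε
  rw [nhds_prod_eq] at h
  obtain ⟨s, hs1, hs2⟩ := eventually_prod_self_iff'.1 h
  obtain ⟨R, hR, hRs⟩ := Metric.mem_nhds_iff.1 hs1
  refine ⟨R, hR, fun y hy y' hy' => ?_⟩
  have := hs2 y' (hRs hy') y (hRs hy)
  simpa using this

lemma exists_c {A : Type} [MetricSpace A] [CompactSpace A] [Nonempty A]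
    (b : Euc N → A → Euc N)
    (hbc : Continuous (fun q : Euc N × A => b q.1 q.2)) (x₀ m : Euc N)
    (h : ∀ α, ⟪b x₀ α, m⟫ < 0) : ∃ c > 0, ∀ α, 3 * c ≤ ⟪b x₀ α, -m⟫ := by
  have hcont : Continuous fun α => ⟪b x₀ α, -m⟫ := by
    have : Continuous fun α => b x₀ α := hbc.comp (by fun_prop : Continuous fun α => (x₀, α))
    fun_prop
  obtain ⟨α₀, -, hα₀⟩ := isCompact_univ.exists_isMinOn (univ_nonempty (α := A)) hcont.continuousOn
  refine ⟨⟪b x₀ α₀, -m⟫ / 3, ?_, fun α => ?_⟩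
  · rw [inner_neg_right]; linarith [h α₀]
  · have := hα₀ (mem_univ α)
    have h2 : ⟪b x₀ α₀, -m⟫ ≤ ⟪b x₀ α, -m⟫ := this
    linarith

lemma exists_family (d : Euc N → ℝ) (hd : LipschitzWith 2 d) (e x0 : Euc N) (R ε : ℝ) (hR : 0 < R)
    (hε0 : 0 ≤ ε) (hε : ∀ y ∈ ball x0 R, ∀ y' ∈ ball x0 R,
      |d y' - d y - ⟪e, y' - y⟫| ≤ ε * ‖y' - y‖) :
    ∃ D : ℕ → Euc N → ℝ, (∀ k, ContDiff ℝ 2 (D k)) ∧ (∀ k y, |D k y - d y| ≤ 1 / 2 ^ k) ∧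
      ∀ k, ∀ y ∈ ball x0 (R / 2), ∀ y' ∈ ball x0 (R / 2),
        |D k y' - D k y - ⟪e, y' - y⟫| ≤ ε * ‖y' - y‖ := by
  have h := fun k : ℕ => exists_mollified d hd e x0 R ε hε0 hε (min (1 / 2 ^ k / 2) (R / 2))
    (by positivity) (min_le_right _ _)
  choose D h1 h2 h3 using h
  refine ⟨D, h1, fun k y => (h2 k y).trans ?_, h3⟩
  have := min_le_left ((1 : ℝ) / 2 ^ k / 2) (R / 2)
  linarith

lemma exists_small (c C1 s L Cj R : ℝ) (hc : 0 < c) (hs : s < 1) (hCj : 0 < Cj)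
    (hR : 0 < R) : ∃ r > 0, r ≤ R / 4 ∧ r ≤ 1 / 4 ∧ r ≤ Cj ∧ L * r ≤ c ∧
      C1 * (2 * r) ^ (1 - s) ≤ c := by
  have ht : Tendsto (fun r : ℝ => C1 * (2 * r) ^ (1 - s)) (𝓝[>] 0) (𝓝 0) := by
    have : Continuous fun r : ℝ => C1 * (2 * r) ^ (1 - s) := by
      refine continuous_const.mul ((Real.continuous_rpow_const (by linarith)).comp (by fun_prop))
    have h := this.tendsto 0
    simp only [mul_zero, Real.zero_rpow (by linarith : 1 - s ≠ 0)] at h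
    exact h.mono_left nhdsWithin_le_nhds
  have hL : Tendsto (fun r : ℝ => L * r) (𝓝[>] 0) (𝓝 0) := by
    have : Continuous fun r : ℝ => L * r := by fun_prop
    have h := this.tendsto 0
    simp only [mul_zero] at h
    exact h.mono_left nhdsWithin_le_nhds
  have hid : ∀ a : ℝ, 0 < a → ∀ᶠ r in 𝓝[>] (0 : ℝ), r ≤ a := fun a ha =>
    nhdsWithin_le_nhds (ge_mem_nhds ha)
  have h0 : ∀ᶠ r in 𝓝[>] (0 : ℝ), 0 < r := self_mem_nhdsWithin
  obtain ⟨r, h1, h2, h3, h4, h5, h6⟩ := ((h0.and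
    ((hid (R / 4) (by positivity)).and ((hid (1 / 4) (by norm_num)).and ((hid Cj hCj).and
      ((hL.eventually (ge_mem_nhds hc)).and (ht.eventually (ge_mem_nhds hc)))))))).exists
  exact ⟨r, h1, h2, h3, h4, h5, h6⟩

/-- **Existence of a blow-up supersolution near `Γ_in` (Lemma `lemblowup`).**
Under (O), (M), (J0), (J1), for a continuous bounded drift `b` which is Lipschitz in `x`
uniformly in the control, every `x̄ ∈ Γ_in` admits `r > 0` and a positive function
`U ∈ C²(B_r(x̄) ∩ Ω)` such that for every `0 < ξ < C_j⁻¹ r / 2`: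
(i)  `-b(x,α)·DU(x) - I_ξ[U](x) ≥ 0` on `B_{r/2}(x̄) ∩ Ω` for every control `α`, and
(ii) `U(x) ≥ 1/ω_r(d(x))` on `B_r(x̄) ∩ Ω` for some nonnegative continuous `ω_r`,
strictly increasing near `0`, with `ω_r(0) = 0`. -/
theorem blowup_supersolution
    (hN : 0 < N) (Ω : Set (Euc N)) (hΩ : IsW2Domain hN Ω)
    (n : Euc N → Euc N) (hn : IsExteriorNormal Ω n)
    (g : Euc N → Euc N → ℝ) (Cμ Dμ σ : ℝ) (hM : AssumptionM Ω g Cμ Dμ σ)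
    (j : Euc N → Euc N → Euc N) (Aj : ℝ) (hJ0 : AssumptionJ0 Ω j Aj)
    (Cj' Cj Dj : ℝ) (hJ1 : AssumptionJ1 Ω j Cj' Cj Dj)
    {A : Type} [MetricSpace A] [CompactSpace A] [Nonempty A]
    (b : Euc N → A → Euc N)
    (hbc : Continuous (fun q : Euc N × A => b q.1 q.2)) (hbb : ∃ M, ∀ x α, ‖b x α‖ ≤ M)
    (hbL : AssumptionL Ω b) :
    ∀ x₀ ∈ GammaIn Ω n b, ∃ r > (0:ℝ), ∃ U : Euc N → ℝ,
      (∀ x ∈ ball x₀ r ∩ Ω, 0 < U x) ∧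
      ContDiffOn ℝ 2 U (ball x₀ r ∩ Ω) ∧
      (∀ ξ : ℝ, 0 < ξ → ξ < Cj⁻¹ * r / 2 →
        ∀ x ∈ ball x₀ (r / 2) ∩ Ω, ∀ α : A,
          0 ≤ -⟪b x α, gradient U x⟫ - Iin Ω j g ξ U x) ∧
      (∃ ω : ℝ → ℝ, Continuous ω ∧ (∀ s, 0 ≤ ω s) ∧ ω 0 = 0 ∧
        (∃ η > (0:ℝ), StrictMonoOn ω (Icc 0 η)) ∧
        ∀ x ∈ ball x₀ r ∩ Ω, 1 / ω (sdist Ω x) ≤ U x) := by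
  intro x₀ hx₀
  obtain ⟨hfr, hneg⟩ := hx₀
  obtain ⟨⟨hCμ, hσ, hgm, hg0, hg⟩, -, -⟩ := hM
  obtain ⟨-, hCj, -, hJb, -⟩ := hJ1
  obtain ⟨M, hMb⟩ := hbb
  obtain ⟨L, hL0, hL⟩ := hbL
  have hΩo := hΩ.1
  set d := sdist Ω with hd
  have hdl : LipschitzWith 2 d := sdist_lip Ω
  have hx₀c : x₀ ∈ closure Ω := frontier_subset_closure hfr
  have hx₀n : x₀ ∈ Ωᶜ := by
    rw [hΩo.frontier_eq] at hfr
    exact hfr.2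
  have hd0 : d x₀ = 0 := sdist_frontier Ω x₀ hfr
  obtain ⟨c, hc, hcb⟩ := exists_c b hbc x₀ (n x₀) hneg
  set e := -(n x₀) with he_def
  have he : ‖e‖ = 1 := by rw [he_def, norm_neg]; exact (hn x₀ hfr).1
  have hM0 : 0 < |M| + 1 := by positivity
  set ε := min (1 / 2) (c / (|M| + 1)) with hε_def
  have hε : 0 < ε := by positivity
  have hε2 : ε ≤ 1 / 2 := min_le_left _ _
  have hεM : ∀ x α, ε * ‖b x α‖ ≤ c := by
    intro x α
    have h1 : ε ≤ c / (|M| + 1) := min_le_right _ _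
    have h2 : ‖b x α‖ ≤ |M| + 1 := by linarith [hMb x α, le_abs_self M]
    calc ε * ‖b x α‖ ≤ c / (|M| + 1) * (|M| + 1) := by gcongr
      _ = c := by field_simp
  obtain ⟨R, hR, hRd⟩ := sdist_strict hN Ω hΩ n hn x₀ hfr ε hε
  obtain ⟨D, hDC, hDd, hDe⟩ := exists_family d hdl e x₀ R ε hR hε.le hRd
  obtain ⟨Bd, hBd0, hBd⟩ := exists_det_bound (N := N) Aj
  set κ := (1 - σ) / 3 with hκ_def
  have hκ : 0 < κ := by have := hσ.2; simp only [hκ_def]; linarith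
  set C1 := Ct N σ κ κ Cμ Cj Bd with hC1_def
  have hC1 : 0 ≤ C1 := Ct_nonneg σ κ κ Cμ Cj Bd hCμ hCj hBd0
  set s := σ + κ + κ with hs_def
  have hs1 : s < 1 := by have := hσ.2; simp only [hs_def, hκ_def]; linarith
  obtain ⟨r, hr, hrR, hr4, hrCj, hLr, hrC⟩ := exists_small c C1 s L Cj R hc hs1 hCj hR
  have hpos : ∀ x ∈ Ω, 0 < d x := fun x hx => sdist_pos Ω hΩo ⟨x₀, hx₀n⟩ x hx
  have hsm : ∀ x ∈ ball x₀ r, d x ≤ 2 * r := by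
    intro x hx
    have h1 := hdl.dist_le_mul x x₀
    rw [Real.dist_eq, hd0, sub_zero] at h1
    have h2 := le_abs_self (d x)
    have h3 := mem_ball.1 hx
    have h4 : ((2 : ℝ≥0) : ℝ) = 2 := by norm_num
    rw [h4] at h1
    linarith
  have hlow : ∀ x ∈ ball x₀ r ∩ Ω, 1 - Real.log (d x) ≤ Uf D x := fun x hx =>
    Uf_lower D d hdl.continuous hDd x (hpos x hx.2) (by linarith [hsm x hx.1])
  refine ⟨r, hr, Uf D, fun x hx => ?_, fun x hx => ?_, ?_, om, om_cont, om_nonneg, ?_,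
    ⟨1, one_pos, om_strict⟩, fun x hx => ?_⟩
  · have h1 := hlow x hx
    have h2 := Real.log_nonpos (hpos x hx.2).le (by linarith [hsm x hx.1])
    linarith
  · exact (Uf_contDiffAt D d hdl.continuous hDd hDC x (hpos x hx.2)).contDiffWithinAt
  · intro ξ hξ0 hξ x hx α
    have hxΩ := hx.2
    have hxc : x ∈ closure Ω := subset_closure hxΩ
    have hxr : x ∈ ball x₀ r := ball_subset_ball (by linarith) hx.1
    have hxR : x ∈ ball x₀ (R / 2) := ball_subset_ball (by linarith) hxr
    have hδ := hpos x hxΩ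
    have hδr := hsm x hxr
    obtain ⟨hJ1d, hJbij, hJinv, hJA⟩ := hJ0 x hxc
    have hJc : Continuous (j x) := hJ1d.continuous
    have hJn : ∀ z, ‖j x z‖ ≤ Cj * ‖z‖ := fun z => (hJb x hxc z).2
    have hξ' : Cj * ξ < r / 2 := by
      have := mul_lt_mul_of_pos_left hξ hCj
      calc Cj * ξ < Cj * (Cj⁻¹ * r / 2) := this
        _ = r / 2 := by field_simp
    have hnear : ∀ w : Euc N, ‖w‖ < r / 2 → x + w ∈ ball x₀ r := by
      intro w hw
      have h1 := mem_ball_iff_norm.1 hx.1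
      rw [mem_ball_iff_norm]
      calc ‖x + w - x₀‖ = ‖(x - x₀) + w‖ := by congr 1; abel
        _ ≤ ‖x - x₀‖ + ‖w‖ := norm_add_le _ _
        _ < r := by linarith
    set Z := {z : Euc N | ‖z‖ < ξ ∧ x + j x z ∈ closure Ω} with hZ_def
    have hZm : MeasurableSet Z := by
      refine MeasurableSet.inter ?_ ?_
      · exact (isOpen_lt continuous_norm continuous_const).measurableSet
      · exact (isClosed_closure.preimage (by fun_prop : Continuous fun z => x + j x z)).measurableSet
    have hZρ : ∀ z ∈ Z, ‖j x z‖ < r / 2 := by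
      intro z hz
      have h1 : Cj * ‖z‖ ≤ Cj * ξ := mul_le_mul_of_nonneg_left hz.1.le hCj.le
      linarith [hJn z]
    have hZ1 : ∀ z ∈ Z, ‖z‖ < 1 := by
      intro z hz
      have h1 : ‖z‖ < ξ := hz.1
      have h2 : Cj * ξ < Cj * 1 := by linarith
      have h3 := lt_of_mul_lt_mul_left h2 hCj.le
      linarith
    have hlin := U_lintegral hN σ κ κ Cμ Cj (d x) (r / 2) Aj Bd hσ.1 hκ hκ hs1.le hCμ hCj x e he
      (j x) (g x) D d Z hZm hZ1 hZρ (fun z hz => sdist_nonneg Ω _ hz.2) rfl hδ (by linarith)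
      hJn (hgm x) (hg0 x hxc) (hg x hxc) hDC hDd ?_ hdl ?_ hJbij hJc hJinv hJA hBd0 hBd
    · have hI : Iin Ω j g ξ (Uf D) x ≤ C1 * d x ^ (-s) :=
        integral_le_of_lintegral _ _ _ (by positivity) hlin
      have hgrad : c / d x ≤ -⟪b x α, gradient (Uf D) x⟫ := by
        refine Uf_decr D d hdl.continuous hDd hDC x (b x α) hδ (by linarith) c hc ?_
        have hcont : Tendsto (fun t : ℝ => x + t • b x α) (𝓝[>] 0) (𝓝 x) := by
          have : Continuous fun t : ℝ => x + t • b x α := by fun_prop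
          have h := this.tendsto 0
          simp only [zero_smul, add_zero] at h
          exact h.mono_left nhdsWithin_le_nhds
        have hpt : ∀ᶠ t in 𝓝[>] (0 : ℝ), 0 < t := self_mem_nhdsWithin
        filter_upwards [hpt, hcont.eventually (isOpen_ball.mem_nhds hxR)] with t ht hxt k
        have h1 := (abs_le.1 (hDe k x hxR _ hxt)).1
        rw [add_sub_cancel_left, inner_smul_right, norm_smul, Real.norm_of_nonneg ht.le] at h1
        have h2 : 2 * c ≤ ⟪e, b x α⟫ := by
          have h3 := hcb α
          have h4 := hL α x hxc x₀ hx₀c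
          have h5 : ‖x - x₀‖ ≤ r := (mem_ball_iff_norm.1 hxr).le
          have h6 : |⟪e, b x α - b x₀ α⟫| ≤ ‖e‖ * ‖b x α - b x₀ α‖ := abs_real_inner_le_norm _ _
          rw [he, one_mul, inner_sub_right] at h6
          have h7 := (abs_le.1 h6).1
          have h8 : L * ‖x - x₀‖ ≤ L * r := by gcongr
          rw [real_inner_comm] at h3
          linarith
        have h9 := hεM x α
        have h10 : t * (2 * c) ≤ t * ⟪e, b x α⟫ := by gcongr
        have h11 : t * (ε * ‖b x α‖) ≤ t * c := by gcongr
        linarith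
      have hfin : C1 * d x ^ (-s) ≤ c / d x := by
        rw [le_div_iff₀ hδ]
        have h1 : d x ^ (-s) * d x = d x ^ (1 - s) := by
          rw [← Real.rpow_add_one hδ.ne']; congr 1; ring
        rw [mul_assoc, h1]
        refine le_trans ?_ hrC
        gcongr
      linarith
    · intro k z hz
      have hz' := ball_subset_ball (by linarith : r ≤ R / 2) (hnear _ (hZρ z hz))
      have h1 := hDe k x hxR _ hz'
      rw [add_sub_cancel_left] at h1
      have h2 : |⟪e, j x z⟫| ≤ ‖e‖ * ‖j x z‖ := abs_real_inner_le_norm _ _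
      rw [he, one_mul] at h2
      have h3 : ε * ‖j x z‖ ≤ 1 / 2 * ‖j x z‖ := by gcongr
      have h4 := norm_nonneg (j x z)
      rw [abs_le] at h1 h2 ⊢
      constructor <;> linarith [h1.1, h1.2, h2.1, h2.2]
    · intro y hy y' hy' t ht hyt
      have hy1 := ball_subset_ball (by linarith : r ≤ R) (hnear _ (mem_ball_zero_iff.1 hy))
      have hy2 := ball_subset_ball (by linarith : r ≤ R) (hnear _ (mem_ball_zero_iff.1 hy'))
      have h1 := (abs_le.1 (hRd _ hy2 _ hy1)).1
      have h2 : x + y - (x + y') = t • e := by rw [hyt]; abel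
      rw [h2, inner_smul_right, real_inner_self_eq_norm_sq, he, norm_smul, he,
        Real.norm_of_nonneg ht] at h1
      have h3 : ε * t ≤ 1 / 2 * t := by gcongr
      linarith
  · simp [om]
  · have h1 := hpos x hx.2
    have h2 : d x ≤ 1 := by linarith [hsm x hx.1]
    have h3 : om (d x) = (1 - Real.log (d x))⁻¹ := by simp [om, not_le.2 h1, min_eq_left h2]
    rw [h3, one_div, inv_inv]
    exact hlow x hx


end Censored

end
end
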